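/- arXiv:2107.02037 — 2 statements merged into one kernel-verified Lean document; each statement's English description precedes it below -/
import Mathlib

section
/- Orthogonality of even primitive characters: Let R ∈ ℳ and A, B ∈ 𝒜. Then Σ*_{χ mod R, χ even} χ(A) \overline{χ}(B) equals (1/(q−1)) Σ_{a ∈ 𝔽_q^*} Σ_{E,F ∈ ℳ, EF = R, F | (A − aB)} μ(E) φ(F) if gcd(AB, R) = 1, and equals 0 otherwise. -/
open scoped BigOperators
open Filter

noncomputable section

namespace FFEH

variable {Fq : Type} [Field Fq] [Fintype Fq]

open Classical in
/-- The absolute value `|A| = q ^ deg A` of a polynomial `A ∈ 𝔽_q[T]`, with `|0| = 0`. -/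
def absP (A : Polynomial Fq) : ℝ :=
  if A = 0 then 0 else (Fintype.card Fq : ℝ) ^ A.natDegree

/-- Monic irreducible ("prime") polynomials. -/
def IsMonicPrime (P : Polynomial Fq) : Prop := P.Monic ∧ Irreducible P

/-- A Dirichlet character of modulus `R` on `𝔽_q[T]`. -/
structure IsDirichletChar (R : Polynomial Fq) (χ : Polynomial Fq → ℂ) : Prop where
  map_one' : χ 1 = 1
  map_mul' : ∀ A B : Polynomial Fq, χ (A * B) = χ A * χ B
  congr' : ∀ A B : Polynomial Fq, R ∣ A - B → χ A = χ B
  eq_zero_iff' : ∀ A : Polynomial Fq, χ A = 0 ↔ ¬ IsCoprime A R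

/-- A primitive Dirichlet character of modulus `R`: one induced by no character of
modulus of strictly smaller degree. -/
def IsPrimitiveChar (R : Polynomial Fq) (χ : Polynomial Fq → ℂ) : Prop :=
  IsDirichletChar R χ ∧
    ∀ S : Polynomial Fq, S.Monic → S ∣ R → S.natDegree < R.natDegree →
      ¬ ∃ χ₁ : Polynomial Fq → ℂ, IsDirichletChar S χ₁ ∧
        ∀ A : Polynomial Fq, IsCoprime A R → χ A = χ₁ A

/-- An even character: trivial on the nonzero constants. -/
def IsEvenChar (χ : Polynomial Fq → ℂ) : Prop :=
  ∀ a : Fq, a ≠ 0 → χ (Polynomial.C a) = 1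

/-- `φ*(R)`: the number of primitive characters of modulus `R`. -/
def numPrimChars (R : Polynomial Fq) : ℕ :=
  Set.ncard {χ : Polynomial Fq → ℂ | IsPrimitiveChar R χ}

/-- The Euler totient `φ(R) = #(𝔽_q[T]/(R))ˣ`. -/
def phiP (R : Polynomial Fq) : ℕ :=
  Nat.card ((Polynomial Fq ⧸ Ideal.span {R})ˣ)

/-- `ω(A)`: the number of distinct monic prime divisors of `A`. -/
def omegaP (A : Polynomial Fq) : ℕ :=
  Set.ncard {P : Polynomial Fq | IsMonicPrime P ∧ P ∣ A}

open Classical in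
/-- The Möbius function on monic polynomials. -/
def muP (A : Polynomial Fq) : ℤ :=
  if Squarefree A then (-1) ^ omegaP A else 0

/-- `d_k(A)`: the number of ways of writing `A` as an ordered product of `k` monic
polynomials. -/
def dk (k : ℕ) (A : Polynomial Fq) : ℕ :=
  Set.ncard {v : Fin k → Polynomial Fq | (∀ i, (v i).Monic) ∧ ∏ i, v i = A}

/-- `A ∈ 𝒮_ℳ(X)`: `A` is monic and all its prime divisors have degree at most `X`. -/
def SmoothM (X : ℕ) (A : Polynomial Fq) : Prop :=
  A.Monic ∧ ∀ P : Polynomial Fq, IsMonicPrime P → P ∣ A → P.natDegree ≤ X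

/-- The Dirichlet `L`-function of a non-trivial character `χ` of modulus `R`:
`L(s,χ) = ∑_{A monic, deg A < deg R} χ(A) |A|^{-s}`. -/
def Lfun (R : Polynomial Fq) (χ : Polynomial Fq → ℂ) (s : ℂ) : ℂ :=
  ∑ᶠ A ∈ {A : Polynomial Fq | A.Monic ∧ A.natDegree < R.natDegree},
    χ A * (absP A : ℂ) ^ (-s)

open Classical in
/-- The von Mangoldt function: `Λ(A) = log |P|` if `A = P^j` (`P` monic prime, `j ≥ 1`),
and `0` otherwise. -/
def LambdaP (A : Polynomial Fq) : ℝ :=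
  if h : ∃ P : Polynomial Fq, (P.Monic ∧ Irreducible P) ∧ ∃ j : ℕ, 1 ≤ j ∧ A = P ^ j
  then Real.log (absP h.choose) else 0

/-- The partial Euler product `P_X(s,χ)`. -/
def PX (X : ℕ) (χ : Polynomial Fq → ℂ) (s : ℂ) : ℂ :=
  Complex.exp (∑ᶠ A ∈ {A : Polynomial Fq | A.Monic ∧ A.natDegree ≤ X},
    χ A * (LambdaP A : ℂ) / ((absP A : ℂ) ^ s * (Real.log (absP A) : ℂ)))

/-- The `L`-function of `χ` as a polynomial in the variable `w = q^{-s}`. -/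
def LPoly (R : Polynomial Fq) (χ : Polynomial Fq → ℂ) : Polynomial ℂ :=
  ∑ n ∈ Finset.range R.natDegree,
    Polynomial.C (∑ᶠ A ∈ {A : Polynomial Fq | A.Monic ∧ A.natDegree = n}, χ A) *
      Polynomial.X ^ n

/-- The sum of `f` over the zeros of `L(s,χ)` counted with multiplicity, including
all the vertical `2π/log q`-periodic repetitions: the zeros are exactly the points
`-log w / log q + 2πim/log q` for `w` a root (with multiplicity) of the `L`-polynomial
and `m ∈ ℤ`. -/
def zeroSum (R : Polynomial Fq) (χ : Polynomial Fq → ℂ) (f : ℂ → ℂ) : ℂ :=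
  ((LPoly R χ).roots.map (fun w => ∑' m : ℤ,
    f (-Complex.log w / (Real.log (Fintype.card Fq) : ℂ) +
        2 * Real.pi * Complex.I * (m : ℂ) / (Real.log (Fintype.card Fq) : ℂ)))).sum

/-- The exponential integral `E₁(y) = ∫_{w=y}^{y+∞} e^{-w}/w dw`, along the horizontal
ray from `y` in the direction of `+1`. -/
def E1 (y : ℂ) : ℂ :=
  ∫ t : ℝ in Set.Ioi (0 : ℝ), Complex.exp (-(y + (t : ℂ))) / (y + (t : ℂ))

/-- `U(z) = ∫_0^∞ u(x) E₁(z log x) dx`. -/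
def Ufun (u : ℝ → ℝ) (z : ℂ) : ℂ :=
  ∫ x : ℝ in Set.Ioi (0 : ℝ), (u x : ℂ) * E1 (z * (Real.log x : ℂ))

/-- The Mellin transform `ũ(s) = ∫_0^∞ x^{s-1} u(x) dx`. -/
def mellinT (u : ℝ → ℝ) (s : ℂ) : ℂ :=
  ∫ x : ℝ in Set.Ioi (0 : ℝ), (x : ℂ) ^ (s - 1) * (u x : ℂ)

/-- The arithmetic-factor constant `a(k)`. -/
def aConst (Fq : Type) [Field Fq] [Fintype Fq] (k : ℕ) : ℝ :=
  ∏' P : {P : Polynomial Fq // IsMonicPrime P},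
    (1 - (absP P.1)⁻¹) ^ (k ^ 2) * ∑' m : ℕ, (dk k (P.1 ^ m) : ℝ) ^ 2 / absP (P.1 ^ m)

/-- The modified partial Euler product `P_X^*(s,χ)`. -/
def PXstar (X : ℕ) (χ : Polynomial Fq → ℂ) (s : ℂ) : ℂ :=
  (∏ᶠ P ∈ {P : Polynomial Fq | IsMonicPrime P ∧ P.natDegree ≤ X},
      (1 - χ P / (absP P : ℂ) ^ s)⁻¹) *
    ∏ᶠ P ∈ {P : Polynomial Fq | IsMonicPrime P ∧ X < 2 * P.natDegree ∧ P.natDegree ≤ X},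
      (1 + χ P ^ 2 / (2 * (absP P : ℂ) ^ (2 * s)))⁻¹

open Classical in
/-- The multiplicity of `P` in `A` (for `A ≠ 0`). -/
def multP (P A : Polynomial Fq) : ℕ :=
  if A = 0 then 0 else Nat.findGreatest (fun e => P ^ e ∣ A) A.natDegree

/-- Local coefficients of the Dirichlet series of `P_X^*(s,χ)^k`. -/
def locAlpha (k X : ℕ) (P : Polynomial Fq) (m : ℕ) : ℝ :=
  if m = 0 then 1
  else if X < P.natDegree then 0
  else if 2 * P.natDegree ≤ X then (dk k (P ^ m) : ℝ)
  else ∑ j ∈ Finset.range (m / 2 + 1),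
    (dk k (P ^ (m - 2 * j)) : ℝ) * (dk k (P ^ j) : ℝ) * (-(2 : ℝ)⁻¹) ^ j

/-- `α_k(A)`: the coefficients of the Dirichlet series `P_X^*(s,χ)^k = ∑ α_k(A)χ(A)|A|^{-s}`. -/
def alphaK (k X : ℕ) (A : Polynomial Fq) : ℝ :=
  ∏ᶠ P ∈ {P : Polynomial Fq | IsMonicPrime P ∧ P ∣ A}, locAlpha k X P (multP P A)

/-- Local coefficients of the Dirichlet series of `P_X^*(s,χ)^{-1}`. -/
def locAlphaNeg (X : ℕ) (P : Polynomial Fq) (m : ℕ) : ℝ :=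
  if m = 0 then 1
  else if X < P.natDegree then 0
  else if m = 1 then -1
  else if m = 2 then (if 2 * P.natDegree ≤ X then 0 else 2⁻¹)
  else if m = 3 then (if 2 * P.natDegree ≤ X then 0 else -2⁻¹)
  else 0

/-- The multiplicative function `α_{-1}`. -/
def alphaNeg (X : ℕ) (A : Polynomial Fq) : ℝ :=
  ∏ᶠ P ∈ {P : Polynomial Fq | IsMonicPrime P ∧ P ∣ A}, locAlphaNeg X P (multP P A)

/-- The cosine integral `Ci(y) = -∫_y^∞ cos t / t dt`. -/
def Ci (y : ℝ) : ℝ := -∫ t : ℝ in Set.Ioi y, Real.cos t / t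

open Classical in
/-- The greatest common monic divisor of two polynomials. -/
def gcdP (A B : Polynomial Fq) : Polynomial Fq :=
  Polynomial.C ((EuclideanDomain.gcd A B).leadingCoeff)⁻¹ * EuclideanDomain.gcd A B

/-- The decomposition shape of Lemma `A₁A₂A₃ = B₁B₂B₃`: all factors monic, the
coprimality conditions `gcd(V_{i,j}, V_{k,l}) = 1` for `i ≠ k` and `j ≠ l`, and the six
product equations. -/
def Decomp3 (A1 A2 A3 B1 B2 B3 G1 G2 G3 V12 V13 V21 V23 V31 V32 : Polynomial Fq) : Prop :=
  G1.Monic ∧ G2.Monic ∧ G3.Monic ∧ V12.Monic ∧ V13.Monic ∧ V21.Monic ∧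
    V23.Monic ∧ V31.Monic ∧ V32.Monic ∧
  IsCoprime V12 V21 ∧ IsCoprime V12 V23 ∧ IsCoprime V12 V31 ∧
  IsCoprime V13 V21 ∧ IsCoprime V13 V31 ∧ IsCoprime V13 V32 ∧
  IsCoprime V21 V32 ∧ IsCoprime V23 V31 ∧ IsCoprime V23 V32 ∧
  A1 = G1 * V12 * V13 ∧ B1 = G1 * V21 * V31 ∧
  A2 = G2 * V21 * V23 ∧ B2 = G2 * V12 * V32 ∧
  A3 = G3 * V31 * V32 ∧ B3 = G3 * V13 * V23

/-!
The characters modulo `F` are those of the finite group `(K[T]/(F))ˣ`, so summing `χ(X) χ̄(Y)` over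
them gives `φ(F)` if `F ∣ X - Y` and `0` otherwise. For `F ∣ R` every unit modulo `F` lifts to a
unit modulo `R`; hence the characters modulo `F` correspond bijectively to the characters modulo
`R` induced from `F`. If a character modulo `R` is induced from `F₁` and from `F₂`, it is induced
from `gcd(F₁, F₂)`, so the divisors of `R` inducing it are the multiples of a single conductor `D`,
and `∑_{EF = R, D ∣ F} μ(E)` is `1` if `D = R` and `0` otherwise. Möbius inversion over `EF = R`
therefore isolates the primitive characters, and the average of `χ̄(a)` over `a ∈ 𝔽_q^*` isolates
the even ones while replacing `Y` by `aY`.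
-/

section Quotient

variable {S : Type*} [CommRing S]

lemma mk_span_singleton_eq_iff_dvd {r x y : S} :
    Ideal.Quotient.mk (Ideal.span {r}) x = Ideal.Quotient.mk (Ideal.span {r}) y ↔ r ∣ x - y := by
  rw [Ideal.Quotient.eq, Ideal.mem_span_singleton]

lemma isUnit_mk_span_singleton_iff {r x : S} :
    IsUnit (Ideal.Quotient.mk (Ideal.span {r}) x) ↔ IsCoprime x r := by
  simp only [isUnit_iff_exists_inv', Ideal.Quotient.mk_surjective.exists, ← map_mul,
    ← map_one (Ideal.Quotient.mk _), mk_span_singleton_eq_iff_dvd]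
  refine exists_congr fun a => ⟨fun ⟨b, hb⟩ => ⟨-b, ?_⟩, fun ⟨b, hb⟩ => ⟨-b, ?_⟩⟩
  · linear_combination hb
  · linear_combination hb

lemma isCoprime_congr_of_dvd_sub {r x y : S} (h : r ∣ x - y) :
    IsCoprime x r ↔ IsCoprime y r := by
  rw [← isUnit_mk_span_singleton_iff, mk_span_singleton_eq_iff_dvd.2 h,
    isUnit_mk_span_singleton_iff]

lemma exists_dvd_sub_and_isCoprime [IsDomain S] [IsPrincipalIdealRing S] {f r x : S}
    (hr : r ≠ 0) (hx : IsCoprime x f) : ∃ y, f ∣ y - x ∧ IsCoprime y r := by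
  induction r using UniqueFactorizationMonoid.induction_on_prime with
  | h₁ => exact absurd rfl hr
  | h₂ u hu => exact ⟨x, by simp, isCoprime_one_right.of_isCoprime_of_dvd_right hu.dvd⟩
  | h₃ r p hr₀ hp ih =>
    obtain ⟨y, hyx, hyr⟩ := ih hr₀
    have hyf : IsCoprime y f := (isCoprime_congr_of_dvd_sub hyx).2 hx
    by_cases hpy : p ∣ y
    · have hpfr : ¬ p ∣ f * r := fun h => hp.not_isUnit ((hyf.mul_right hyr).isUnit_of_dvd' hpy h)
      refine ⟨y + f * r, add_sub_right_comm y _ x ▸ hyx.add (dvd_mul_right f r),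
        IsCoprime.mul_right ?_ ?_⟩
      · exact (hp.irreducible.coprime_iff_not_dvd.2 fun h => hpfr ((dvd_add_right hpy).1 h)).symm
      · exact hyr.add_mul_right_left f
    · exact ⟨y, hyx, (hp.irreducible.coprime_iff_not_dvd.2 hpy).symm.mul_right hyr⟩

lemma unitsMap_factor_span_singleton_surjective [IsDomain S] [IsPrincipalIdealRing S] {f r : S}
    (hr : r ≠ 0) (h : Ideal.span {r} ≤ Ideal.span {f}) :
    Function.Surjective (Units.map (Ideal.Quotient.factor h).toMonoidHom) := by
  intro u
  obtain ⟨x, hx⟩ := Ideal.Quotient.mk_surjective (u : S ⧸ Ideal.span {f})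
  obtain ⟨y, hyx, hyr⟩ := exists_dvd_sub_and_isCoprime hr
    (isUnit_mk_span_singleton_iff.1 (hx ▸ u.isUnit))
  refine ⟨(isUnit_mk_span_singleton_iff.2 hyr).unit, Units.ext ?_⟩
  simpa [← hx] using mk_span_singleton_eq_iff_dvd.2 hyx

end Quotient

section MulChar

variable {M : Type*} [CommRing M] [Finite M]

lemma sum_mulChar_apply [Fintype (MulChar M ℂ)] [DecidableEq M] (a : M) :
    ∑ ψ : MulChar M ℂ, ψ a = if a = 1 then (Nat.card Mˣ : ℂ) else 0 := by
  split_ifs with ha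
  · simp [ha, ← Nat.card_eq_fintype_card, MulChar.card_eq_card_units_of_hasEnoughRootsOfUnity]
  · obtain ⟨ψ, hψ⟩ := MulChar.exists_apply_ne_one_of_hasEnoughRootsOfUnity M ℂ ha
    refine eq_zero_of_mul_eq_self_left hψ ?_
    simp only [Finset.mul_sum, ← MulChar.mul_apply]
    exact Fintype.sum_bijective _ (Group.mulLeft_bijective ψ) _ _ fun _ => rfl

lemma sum_mulChar_apply_mul_conj_apply [Fintype (MulChar M ℂ)] [DecidableEq M] {a b : M}
    (hb : IsUnit b) : ∑ ψ : MulChar M ℂ, ψ a * starRingEnd ℂ (ψ b) =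
      if a = b then (Nat.card Mˣ : ℂ) else 0 := by
  have hconj (ψ : MulChar M ℂ) : starRingEnd ℂ (ψ b) = ψ (Ring.inverse b) := by
    rw [← MulChar.inv_apply]
    exact MulChar.star_apply' ψ b
  have hab : a * Ring.inverse b = 1 ↔ a = b := by
    obtain ⟨u, rfl⟩ := hb
    rw [Ring.inverse_unit, Units.mul_inv_eq_one]
  simp only [hconj, ← map_mul, sum_mulChar_apply, hab]

end MulChar

section Finsum

variable {α β M : Type*} [AddCommMonoid M]

open Classical in
lemma finsum_mem_sep (s : Set α) (p : α → Prop) (f : α → M) :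
    ∑ᶠ x ∈ {x ∈ s | p x}, f x = ∑ᶠ x ∈ s, if p x then f x else 0 := by
  refine finsum_congr fun x => ?_
  by_cases hs : x ∈ s <;> by_cases hp : p x <;> simp [hs, hp]

lemma finsum_mem_sep_comm {s : Set α} {t : Set β} (hs : s.Finite) (ht : t.Finite)
    (r : α → β → Prop) (f : α → β → M) :
    ∑ᶠ x ∈ s, ∑ᶠ y ∈ {y ∈ t | r x y}, f x y = ∑ᶠ y ∈ t, ∑ᶠ x ∈ {x ∈ s | r x y}, f x y := by
  simp only [finsum_mem_sep, finsum_mem_comm _ hs ht]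

end Finsum

section Moebius

open UniqueFactorizationMonoid

variable {K : Type} [Field K] {D E N P R : Polynomial K} {S : Finset (Polynomial K)}

lemma mem_primeFactors_iff [DecidableEq K] (hN : N ≠ 0) :
    P ∈ primeFactors N ↔ IsMonicPrime P ∧ P ∣ N := by
  rw [mem_primeFactors, mem_normalizedFactors_iff' hN, ← and_assoc, IsMonicPrime]
  refine and_congr_left fun _ => ⟨fun ⟨hP, hn⟩ => ⟨?_, hP⟩, fun ⟨hm, hP⟩ => ⟨hP, ?_⟩⟩
  · exact (Polynomial.normalize_eq_self_iff_monic hP.ne_zero).1 hn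
  · exact hm.normalize_eq_self

lemma omegaP_eq_card_primeFactors [DecidableEq K] (hN : N ≠ 0) :
    omegaP N = (primeFactors N).card := by
  rw [omegaP, ← Set.ncard_coe_finset]
  exact congrArg Set.ncard (Set.ext fun P => (mem_primeFactors_iff hN).symm)

lemma muP_of_squarefree [DecidableEq K] (hN : Squarefree N) :
    muP N = (-1) ^ (primeFactors N).card := by
  rw [muP, if_pos hN, omegaP_eq_card_primeFactors hN.ne_zero]

lemma radical_eq_self [DecidableEq K] (hN : N.Monic) (h : Squarefree N) : radical N = N :=
  Polynomial.eq_of_monic_of_associated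
    (Polynomial.monic_prod_of_monic _ _ fun _ hP => ((mem_primeFactors_iff hN.ne_zero).1 hP).1.1)
    hN (radical_associated h.isRadical hN.ne_zero)

lemma primeFactors_prod_of_subset [DecidableEq K] (hN : N ≠ 0) (hS : S ⊆ primeFactors N) :
    primeFactors (∏ P ∈ S, P) = S := by
  have hprime {P} (hP : P ∈ S) : IsMonicPrime P := ((mem_primeFactors_iff hN).1 (hS hP)).1
  ext P
  rw [mem_primeFactors_iff (Finset.prod_ne_zero_iff.2 fun P hP => (hprime hP).1.ne_zero)]
  refine ⟨fun ⟨hP, hdvd⟩ => ?_, fun hP => ⟨hprime hP, Finset.dvd_prod_of_mem _ hP⟩⟩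
  obtain ⟨Q, hQ, hPQ⟩ := (hP.2.prime.dvd_finsetProd_iff _).1 hdvd
  rwa [Polynomial.eq_of_monic_of_associated hP.1 (hprime hQ).1
    (hP.2.associated_of_dvd (hprime hQ).2 hPQ)]

lemma bijOn_prod_powerset_primeFactors [DecidableEq K] (hN : N ≠ 0) :
    Set.BijOn (fun S : Finset (Polynomial K) => ∏ P ∈ S, P) (primeFactors N).powerset
      {E | (E.Monic ∧ E ∣ N) ∧ Squarefree E} := by
  refine Set.InvOn.bijOn (f' := primeFactors) ⟨fun S hS => ?_, fun E hE => ?_⟩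
    (fun S hS => ?_) fun E hE => ?_
  · exact primeFactors_prod_of_subset hN (Finset.mem_powerset.1 hS)
  · exact radical_eq_self hE.1.1 hE.2
  · have hS := Finset.mem_powerset.1 hS
    have hdvd : ∏ P ∈ S, P ∣ radical N := Finset.prod_dvd_prod_of_subset _ _ id hS
    refine ⟨⟨Polynomial.monic_prod_of_monic _ _ fun P hP => ?_, hdvd.trans radical_dvd_self⟩,
      squarefree_radical.squarefree_of_dvd hdvd⟩
    exact ((mem_primeFactors_iff hN).1 (hS hP)).1.1
  · refine Finset.mem_powerset.2 fun P hP => ?_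
    rw [mem_primeFactors_iff hE.2.ne_zero] at hP
    exact (mem_primeFactors_iff hN).2 ⟨hP.1, hP.2.trans hE.1.2⟩

open Classical in
lemma finsum_mem_monic_dvd_muP (hN : N.Monic) :
    ∑ᶠ E ∈ {E : Polynomial K | E.Monic ∧ E ∣ N}, muP E = if N = 1 then 1 else 0 := by
  calc ∑ᶠ E ∈ {E : Polynomial K | E.Monic ∧ E ∣ N}, muP E
      = ∑ᶠ E ∈ {E : Polynomial K | (E.Monic ∧ E ∣ N) ∧ Squarefree E}, muP E := by
        refine finsum_mem_inter_support_eq' _ _ _ fun E hE => ⟨fun h => ⟨h, ?_⟩, And.left⟩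
        exact of_not_not fun hsq => hE (if_neg hsq)
    _ = ∑ S ∈ (primeFactors N).powerset, (-1) ^ S.card := by
        rw [← finsum_mem_coe_finset]
        refine (finsum_mem_eq_of_bijOn _ (bijOn_prod_powerset_primeFactors hN.ne_zero)
          fun S hS => ?_).symm
        rw [muP_of_squarefree ((bijOn_prod_powerset_primeFactors hN.ne_zero).mapsTo hS).2,
          primeFactors_prod_of_subset hN.ne_zero (Finset.mem_powerset.1 hS)]
    _ = if N = 1 then 1 else 0 := by
        simp only [Finset.sum_powerset_neg_one_pow_card, primeFactors_eq_empty_iff hN.ne_zero,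
          hN.isUnit_iff]

/-- The pairs `(E, F)` of monic polynomials with `E F = R`, over which Dirichlet convolutions
on `K[T]` are summed. -/
def monicDivisorsAntidiagonal (R : Polynomial K) : Set (Polynomial K × Polynomial K) :=
  {p | p.1.Monic ∧ p.2.Monic ∧ p.1 * p.2 = R}

lemma finite_setOf_monic_dvd (hN : N ≠ 0) : {E : Polynomial K | E.Monic ∧ E ∣ N}.Finite := by
  classical
  refine Set.Finite.of_injOn (f := normalizedFactors) (t := Set.Iic (normalizedFactors N))
    (fun E hE => ?_) (fun E hE E' hE' h => ?_) (Set.finite_Iic _)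
  · exact (dvd_iff_normalizedFactors_le_normalizedFactors hE.1.ne_zero hN).1 hE.2
  · exact Polynomial.eq_of_monic_of_associated hE.1 hE'.1
      ((associated_iff_normalizedFactors_eq_normalizedFactors hE.1.ne_zero hE'.1.ne_zero).2 h)

lemma finite_monicDivisorsAntidiagonal (hR : R ≠ 0) : (monicDivisorsAntidiagonal R).Finite := by
  refine ((finite_setOf_monic_dvd hR).prod (finite_setOf_monic_dvd hR)).subset ?_
  rintro ⟨E, F⟩ ⟨hE, hF, rfl⟩
  exact ⟨⟨hE, dvd_mul_right E F⟩, hF, dvd_mul_left F E⟩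

lemma bijOn_fst_monicDivisorsAntidiagonal (hD : D.Monic) (hN : N.Monic) :
    Set.BijOn Prod.fst {p ∈ monicDivisorsAntidiagonal (D * N) | D ∣ p.2}
      {E | E.Monic ∧ E ∣ N} := by
  refine ⟨?_, ?_, ?_⟩
  · rintro ⟨E, _⟩ ⟨⟨hE, -, h⟩, F, rfl⟩
    exact ⟨hE, F, mul_left_cancel₀ hD.ne_zero (by linear_combination -h)⟩
  · rintro ⟨E, F⟩ ⟨⟨hE, -, h⟩, -⟩ ⟨_, F'⟩ ⟨⟨-, -, h'⟩, -⟩ rfl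
    exact congrArg _ (mul_left_cancel₀ hE.ne_zero (h.trans h'.symm))
  · rintro E ⟨hE, F, rfl⟩
    exact ⟨(E, D * F), ⟨⟨hE, hD.mul (hE.of_mul_monic_left hN), by ring⟩, dvd_mul_right D F⟩, rfl⟩

open Classical in
lemma finsum_mem_monicDivisorsAntidiagonal_muP (hR : R.Monic) (hD : D.Monic) (hDR : D ∣ R) :
    ∑ᶠ p ∈ {p ∈ monicDivisorsAntidiagonal R | D ∣ p.2}, muP p.1 = if D = R then 1 else 0 := by
  obtain ⟨N, rfl⟩ := hDR
  have hN : N.Monic := hD.of_mul_monic_left hR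
  rw [finsum_mem_eq_of_bijOn _ (bijOn_fst_monicDivisorsAntidiagonal hD hN) fun _ _ => rfl,
    finsum_mem_monic_dvd_muP hN]
  simp only [left_eq_mul₀ hD.ne_zero]

end Moebius

section Character

variable {K : Type} [Field K] {D F F₁ F₂ R X Y : Polynomial K} {χ ψ : Polynomial K → ℂ}

/-- The Dirichlet character modulo `R` given by a multiplicative character of `K[T]/(R)`. -/
def ofMulChar (R : Polynomial K) (ψ : MulChar (Polynomial K ⧸ Ideal.span {R}) ℂ) :
    Polynomial K → ℂ :=
  fun A => ψ (Ideal.Quotient.mk _ A)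

lemma isDirichletChar_ofMulChar (ψ : MulChar (Polynomial K ⧸ Ideal.span {R}) ℂ) :
    IsDirichletChar R (ofMulChar R ψ) where
  map_one' := by simp [ofMulChar]
  map_mul' := by simp [ofMulChar]
  congr' A B h := congrArg ψ (mk_span_singleton_eq_iff_dvd.2 h)
  eq_zero_iff' A := by
    rw [← isUnit_mk_span_singleton_iff]
    exact ⟨fun h hA => (hA.map ψ).ne_zero h, ψ.map_nonunit⟩

lemma ofMulChar_injective (R : Polynomial K) : Function.Injective (ofMulChar R) := by
  refine fun ψ ψ' h => MulChar.ext' fun a => ?_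
  obtain ⟨A, rfl⟩ := Ideal.Quotient.mk_surjective a
  exact congrFun h A

lemma IsDirichletChar.exists_ofMulChar_eq (hχ : IsDirichletChar R χ) :
    ∃ ψ, ofMulChar R ψ = χ := by
  have hmk := Ideal.Quotient.mk_surjective (I := Ideal.span {R})
  have hinv (A) : χ (Function.surjInv hmk (Ideal.Quotient.mk _ A)) = χ A :=
    hχ.congr' _ _ (mk_span_singleton_eq_iff_dvd.1 (Function.surjInv_eq hmk _))
  refine ⟨⟨⟨⟨fun a => χ (Function.surjInv hmk a), ?_⟩, ?_⟩, ?_⟩, funext hinv⟩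
  · rw [← map_one (Ideal.Quotient.mk _), hinv, hχ.map_one']
  · refine hmk.forall₂.2 fun A B => ?_
    simp only [← map_mul, hinv, hχ.map_mul']
  · refine hmk.forall.2 fun A hA => ?_
    exact (hinv A).trans ((hχ.eq_zero_iff' A).2 (isUnit_mk_span_singleton_iff.not.1 hA))

lemma range_ofMulChar (R : Polynomial K) :
    Set.range (ofMulChar R) = {χ | IsDirichletChar R χ} :=
  Set.ext fun _ => ⟨fun ⟨ψ, h⟩ => h ▸ isDirichletChar_ofMulChar ψ,
    IsDirichletChar.exists_ofMulChar_eq⟩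

lemma finite_quotient_span_singleton [Finite K] (hR : R ≠ 0) :
    Finite (Polynomial K ⧸ Ideal.span {R}) :=
  have : Module.Finite K (Polynomial K ⧸ Ideal.span {R}) := (AdjoinRoot.powerBasis hR).finite
  Module.finite_of_finite K

lemma finite_setOf_isDirichletChar [Finite K] (hR : R ≠ 0) :
    {χ : Polynomial K → ℂ | IsDirichletChar R χ}.Finite := by
  have := finite_quotient_span_singleton hR
  exact range_ofMulChar R ▸ Set.finite_range _

open Classical in
lemma finsum_mem_isDirichletChar [Finite K] (hR : R ≠ 0) (hY : IsCoprime Y R) :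
    ∑ᶠ χ ∈ {χ : Polynomial K → ℂ | IsDirichletChar R χ}, χ X * starRingEnd ℂ (χ Y) =
      if R ∣ X - Y then (phiP R : ℂ) else 0 := by
  have := finite_quotient_span_singleton hR
  have := Fintype.ofFinite (MulChar (Polynomial K ⧸ Ideal.span {R}) ℂ)
  rw [← range_ofMulChar, finsum_mem_range (ofMulChar_injective R), finsum_eq_sum_of_fintype]
  simp only [ofMulChar, phiP, ← mk_span_singleton_eq_iff_dvd,
    sum_mulChar_apply_mul_conj_apply (isUnit_mk_span_singleton_iff.2 hY)]

/-- `χ`, a character modulo `R`, is induced by a character modulo `F`. -/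
def IsInducedFrom (R F : Polynomial K) (χ : Polynomial K → ℂ) : Prop :=
  ∃ ψ, IsDirichletChar F ψ ∧ ∀ A, IsCoprime A R → χ A = ψ A

open Classical in
/-- The character modulo `R` induced by a character `ψ` of modulus dividing `R`. -/
def changeLevel (R : Polynomial K) (ψ : Polynomial K → ℂ) : Polynomial K → ℂ :=
  fun A => if IsCoprime A R then ψ A else 0

lemma changeLevel_apply_of_isCoprime (hX : IsCoprime X R) : changeLevel R ψ X = ψ X := if_pos hX

lemma isDirichletChar_changeLevel (hψ : IsDirichletChar F ψ) (hF : F ∣ R) :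
    IsDirichletChar R (changeLevel R ψ) where
  map_one' := by simp [changeLevel, isCoprime_one_left, hψ.map_one']
  map_mul' A B := by
    classical
    simp only [changeLevel, IsCoprime.mul_left_iff, hψ.map_mul', ite_zero_mul_ite_zero]
  congr' A B h := by
    classical
    exact if_congr (isCoprime_congr_of_dvd_sub h) (hψ.congr' A B (hF.trans h)) rfl
  eq_zero_iff' A := by
    simp only [changeLevel, ite_eq_right_iff, hψ.eq_zero_iff']
    exact ⟨fun h hA => h hA (hA.of_isCoprime_of_dvd_right hF), fun h hA => absurd hA h⟩

lemma bijOn_changeLevel (hR : R ≠ 0) (hF : F ∣ R) :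
    Set.BijOn (changeLevel R) {ψ | IsDirichletChar F ψ}
      {χ ∈ {χ | IsDirichletChar R χ} | IsInducedFrom R F χ} := by
  refine ⟨fun ψ hψ => ?_, fun ψ hψ ψ' hψ' h => funext fun A => ?_, fun χ hχ => ?_⟩
  · exact ⟨isDirichletChar_changeLevel hψ hF, ψ, hψ, fun A => changeLevel_apply_of_isCoprime⟩
  · by_cases hA : IsCoprime A F
    · obtain ⟨B, hBA, hB⟩ := exists_dvd_sub_and_isCoprime hR hA
      have hB' : changeLevel R ψ B = changeLevel R ψ' B := congrFun h B
      rw [changeLevel_apply_of_isCoprime hB, changeLevel_apply_of_isCoprime hB] at hB'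
      rw [← hψ.congr' _ _ hBA, hB', hψ'.congr' _ _ hBA]
    · rw [(hψ.eq_zero_iff' A).2 hA, (hψ'.eq_zero_iff' A).2 hA]
  · obtain ⟨hχR, ψ, hψ, h⟩ := hχ
    refine ⟨ψ, hψ, funext fun A => ?_⟩
    by_cases hA : IsCoprime A R
    · rw [changeLevel_apply_of_isCoprime hA, h A hA]
    · rw [((isDirichletChar_changeLevel hψ hF).eq_zero_iff' A).2 hA, (hχR.eq_zero_iff' A).2 hA]

open Classical in
lemma finsum_mem_isInducedFrom [Finite K] (hR : R ≠ 0) (hF : F ∣ R) (hX : IsCoprime X R)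
    (hY : IsCoprime Y R) :
    ∑ᶠ χ ∈ {χ ∈ {χ | IsDirichletChar R χ} | IsInducedFrom R F χ},
      χ X * starRingEnd ℂ (χ Y) = if F ∣ X - Y then (phiP F : ℂ) else 0 := by
  rw [← finsum_mem_isDirichletChar (ne_zero_of_dvd_ne_zero hR hF)
    (hY.of_isCoprime_of_dvd_right hF)]
  refine (finsum_mem_eq_of_bijOn _ (bijOn_changeLevel hR hF) fun ψ _ => ?_).symm
  rw [changeLevel_apply_of_isCoprime hX, changeLevel_apply_of_isCoprime hY]

lemma IsInducedFrom.congr (h : IsInducedFrom R F χ) (hX : IsCoprime X R) (hY : IsCoprime Y R)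
    (hXY : F ∣ X - Y) : χ X = χ Y := by
  obtain ⟨ψ, hψ, hχψ⟩ := h
  rw [hχψ X hX, hχψ Y hY, hψ.congr' X Y hXY]

lemma IsDirichletChar.isInducedFrom_iff (hχ : IsDirichletChar R χ) (hR : R ≠ 0) (hF : F ∣ R) :
    IsInducedFrom R F χ ↔ ∀ A, IsCoprime A R → F ∣ A - 1 → χ A = 1 := by
  refine ⟨fun h A hA hFA => (h.congr hA isCoprime_one_left hFA).trans hχ.map_one', fun h => ?_⟩
  obtain ⟨ψ, rfl⟩ := hχ.exists_ofMulChar_eq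
  have hle : Ideal.span {R} ≤ Ideal.span {F} := Ideal.span_singleton_le_span_singleton.2 hF
  let π := Units.map (Ideal.Quotient.factor hle).toMonoidHom
  have hπ : Function.Surjective π := unitsMap_factor_span_singleton_surjective hR hle
  have hker : π.ker ≤ ψ.toUnitHom.ker := fun u hu => by
    obtain ⟨A, hA⟩ := Ideal.Quotient.mk_surjective (u : Polynomial K ⧸ Ideal.span {R})
    have hπA : Ideal.Quotient.mk (Ideal.span {F}) A = Ideal.Quotient.mk _ 1 := by
      simpa [π, ← hA] using congrArg Units.val hu
    refine Units.ext ((ψ.coe_toUnitHom u).trans (hA ▸ h A ?_ ?_))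
    · exact isUnit_mk_span_singleton_iff.1 (hA ▸ u.isUnit)
    · exact mk_span_singleton_eq_iff_dvd.1 hπA
  let φ := MonoidHom.liftOfSurjective π hπ ⟨ψ.toUnitHom, hker⟩
  refine ⟨_, isDirichletChar_ofMulChar (MulChar.ofUnitHom φ), fun A hA => ?_⟩
  obtain ⟨u, hu⟩ := isUnit_mk_span_singleton_iff.2 hA
  have hπu : Ideal.Quotient.mk (Ideal.span {F}) A = π u := by simp [π, hu]
  have hφu : φ (π u) = ψ.toUnitHom u :=
    MonoidHom.liftOfRightInverse_comp_apply π _ (Function.rightInverse_surjInv hπ)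
      ⟨ψ.toUnitHom, hker⟩ u
  rw [ofMulChar, ofMulChar, hπu, MulChar.ofUnitHom_coe, hφu, MulChar.coe_toUnitHom, hu]

lemma IsDirichletChar.isInducedFrom_of_mem_span_pair (hχ : IsDirichletChar R χ) (hR : R ≠ 0)
    (hF₁ : F₁ ∣ R) (hF₂ : F₂ ∣ R) (h₁ : IsInducedFrom R F₁ χ) (h₂ : IsInducedFrom R F₂ χ)
    (hF : F ∣ R) (hmem : F ∈ Ideal.span {F₁, F₂}) : IsInducedFrom R F χ := by
  obtain ⟨u, v, huv⟩ := Ideal.mem_span_pair.1 hmem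
  refine (hχ.isInducedFrom_iff hR hF).2 fun X hX ⟨k, hk⟩ => ?_
  obtain ⟨W, hW₁, hW₂⟩ : ∃ W, F₁ ∣ W - 1 ∧ F₂ ∣ X - W :=
    ⟨1 + u * k * F₁, ⟨u * k, by ring⟩, ⟨v * k, by linear_combination hk - k * huv⟩⟩
  have hWF₁ : IsCoprime W F₁ := (isCoprime_congr_of_dvd_sub hW₁).2 isCoprime_one_left
  have hWF₂ : IsCoprime W F₂ :=
    (isCoprime_congr_of_dvd_sub hW₂).1 (hX.of_isCoprime_of_dvd_right hF₂)
  obtain ⟨Z, hZW, hZR⟩ := exists_dvd_sub_and_isCoprime hR (hWF₁.mul_right hWF₂)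
  have hZ₁ : F₁ ∣ Z - 1 := by
    simpa using (dvd_of_mul_right_dvd hZW).add hW₁
  have hZ₂ : F₂ ∣ X - Z := by
    simpa using hW₂.sub (dvd_of_mul_left_dvd hZW)
  rw [h₂.congr hX hZR hZ₂, (hχ.isInducedFrom_iff hR hF₁).1 h₁ Z hZR hZ₁]

/-- `D` is the conductor of the character `χ` modulo `R`: the monic divisor of `R` whose multiples
are exactly the moduli, among the divisors of `R`, of the characters inducing `χ`. -/
structure IsConductor (R D : Polynomial K) (χ : Polynomial K → ℂ) : Prop where
  monic : D.Monic
  dvd : D ∣ R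
  isInducedFrom_iff : ∀ F, F ∣ R → (IsInducedFrom R F χ ↔ D ∣ F)

lemma IsDirichletChar.exists_isConductor (hχ : IsDirichletChar R χ) (hR : R ≠ 0) :
    ∃ D, IsConductor R D χ := by
  classical
  obtain ⟨D, ⟨hDR, hD⟩, hmin⟩ := exists_minimalFor_of_wellFoundedLT
    (fun F => F ∣ R ∧ IsInducedFrom R F χ) Polynomial.natDegree ⟨R, dvd_rfl, χ, hχ, fun _ _ => rfl⟩
  have hD₀ : D ≠ 0 := ne_zero_of_dvd_ne_zero hR hDR
  refine ⟨normalize D, Polynomial.monic_normalize hD₀, normalize_dvd_iff.2 hDR, fun F hFR => ?_⟩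
  rw [normalize_dvd_iff]
  refine ⟨fun hF => ?_, fun hDF => ?_⟩
  · have hGD : EuclideanDomain.gcd D F ∣ D := EuclideanDomain.gcd_dvd_left D F
    have hGind : IsInducedFrom R (EuclideanDomain.gcd D F) χ :=
      hχ.isInducedFrom_of_mem_span_pair hR hDR hFR hD hF (hGD.trans hDR)
        (EuclideanDomain.span_gcd D F ▸ Ideal.mem_span_singleton_self _)
    have hdeg : D.natDegree ≤ (EuclideanDomain.gcd D F).natDegree :=
      hmin ⟨hGD.trans hDR, hGind⟩ (Polynomial.natDegree_le_of_dvd hGD hD₀)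
    exact (Polynomial.associated_of_dvd_of_natDegree_le hGD hD₀ hdeg).symm.dvd.trans
      (EuclideanDomain.gcd_dvd_right D F)
  · refine (hχ.isInducedFrom_iff hR hFR).2 fun A hA hFA => ?_
    exact (hχ.isInducedFrom_iff hR hDR).1 hD A hA (hDF.trans hFA)

lemma IsDirichletChar.isPrimitiveChar_iff_conductor_eq (hχ : IsDirichletChar R χ) (hR : R.Monic)
    (hD : IsConductor R D χ) : IsPrimitiveChar R χ ↔ D = R := by
  constructor
  · rintro ⟨-, hprim⟩
    refine Polynomial.eq_of_dvd_of_natDegree_le_of_leadingCoeff hD.dvd (not_lt.1 fun hlt => ?_) ?_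
    · exact hprim D hD.monic hD.dvd hlt ((hD.isInducedFrom_iff D hD.dvd).2 dvd_rfl)
    · rw [hD.monic.leadingCoeff, hR.leadingCoeff]
  · rintro rfl
    refine ⟨hχ, fun S hS hSD hlt hind => hlt.not_ge ?_⟩
    exact Polynomial.natDegree_le_of_dvd ((hD.isInducedFrom_iff S hSD).1 hind) hS.ne_zero

open Classical in
lemma IsDirichletChar.finsum_mem_isInducedFrom_muP (hχ : IsDirichletChar R χ) (hR : R.Monic) :
    ∑ᶠ p ∈ {p ∈ monicDivisorsAntidiagonal R | IsInducedFrom R p.2 χ}, muP p.1 =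
      if IsPrimitiveChar R χ then 1 else 0 := by
  obtain ⟨D, hD⟩ := hχ.exists_isConductor hR.ne_zero
  have hset : {p ∈ monicDivisorsAntidiagonal R | IsInducedFrom R p.2 χ} =
      {p ∈ monicDivisorsAntidiagonal R | D ∣ p.2} :=
    Set.ext fun p => and_congr_right fun hp => hD.isInducedFrom_iff p.2 (Dvd.intro_left p.1 hp.2.2)
  rw [hset, finsum_mem_monicDivisorsAntidiagonal_muP hR hD.monic hD.dvd]
  exact if_congr (hχ.isPrimitiveChar_iff_conductor_eq hR hD).symm rfl rfl

lemma finsum_mem_isPrimitiveChar [Finite K] (hR : R.Monic) (hX : IsCoprime X R)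
    (hY : IsCoprime Y R) :
    ∑ᶠ χ ∈ {χ : Polynomial K → ℂ | IsPrimitiveChar R χ}, χ X * starRingEnd ℂ (χ Y) =
      ∑ᶠ p ∈ {p ∈ monicDivisorsAntidiagonal R | p.2 ∣ X - Y}, (muP p.1 : ℂ) * phiP p.2 := by
  classical
  have hfin := finite_setOf_isDirichletChar (K := K) hR.ne_zero
  have hpairs := finite_monicDivisorsAntidiagonal hR.ne_zero
  have hmob {χ : Polynomial K → ℂ} (hχ : IsDirichletChar R χ) :
      ∑ᶠ p ∈ {p ∈ monicDivisorsAntidiagonal R | IsInducedFrom R p.2 χ}, (muP p.1 : ℂ) =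
        if IsPrimitiveChar R χ then 1 else 0 := by
    have := (Int.castAddHom ℂ).map_finsum_mem (fun p : Polynomial K × Polynomial K => muP p.1)
      (hpairs.subset (Set.sep_subset _ fun p => IsInducedFrom R p.2 χ))
    rw [hχ.finsum_mem_isInducedFrom_muP hR] at this
    simpa using this.symm
  calc ∑ᶠ χ ∈ {χ : Polynomial K → ℂ | IsPrimitiveChar R χ}, χ X * starRingEnd ℂ (χ Y)
      = ∑ᶠ χ ∈ {χ | IsDirichletChar R χ},
          ∑ᶠ p ∈ {p ∈ monicDivisorsAntidiagonal R | IsInducedFrom R p.2 χ},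
            (muP p.1 : ℂ) * (χ X * starRingEnd ℂ (χ Y)) := by
        have hprim : {χ : Polynomial K → ℂ | IsPrimitiveChar R χ} =
            {χ ∈ {χ | IsDirichletChar R χ} | IsPrimitiveChar R χ} :=
          Set.ext fun χ => ⟨fun h => ⟨h.1, h⟩, And.right⟩
        rw [hprim, finsum_mem_sep]
        refine finsum_mem_congr rfl fun χ hχ => ?_
        rw [← finsum_mem_mul, hmob hχ, ite_mul, one_mul, zero_mul]
    _ = ∑ᶠ p ∈ monicDivisorsAntidiagonal R, (muP p.1 : ℂ) *
          ∑ᶠ χ ∈ {χ ∈ {χ | IsDirichletChar R χ} | IsInducedFrom R p.2 χ},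
            χ X * starRingEnd ℂ (χ Y) := by
        simp only [finsum_mem_sep_comm hfin hpairs, mul_finsum_mem]
    _ = ∑ᶠ p ∈ {p ∈ monicDivisorsAntidiagonal R | p.2 ∣ X - Y}, (muP p.1 : ℂ) * phiP p.2 := by
        rw [finsum_mem_sep]
        refine finsum_mem_congr rfl fun p hp => ?_
        rw [finsum_mem_isInducedFrom hR.ne_zero (Dvd.intro_left p.1 hp.2.2) hX hY, mul_ite,
          mul_zero]

open Classical in
lemma IsDirichletChar.finsum_mem_conj_apply_C [Fintype K] (hχ : IsDirichletChar R χ) :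
    ∑ᶠ a ∈ {a : K | a ≠ 0}, starRingEnd ℂ (χ (Polynomial.C a)) =
      if IsEvenChar χ then (Fintype.card K : ℂ) - 1 else 0 := by
  let f : Kˣ →* ℂ :=
    { toFun a := starRingEnd ℂ (χ (Polynomial.C (a : K)))
      map_one' := by simp [hχ.map_one']
      map_mul' := by simp [hχ.map_mul'] }
  have hf : f = 1 ↔ IsEvenChar χ := by
    refine ⟨fun h a ha => ?_, fun h => ?_⟩
    · have hfa : starRingEnd ℂ (χ (Polynomial.C a)) = 1 := DFunLike.congr_fun h (Units.mk0 a ha)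
      rwa [map_eq_one_iff _ (starRingEnd ℂ).injective] at hfa
    · ext a
      simp [f, h a a.ne_zero]
  have hunits : Set.range ((↑) : Kˣ → K) = {a : K | a ≠ 0} :=
    Set.ext fun a => ⟨fun ⟨u, hu⟩ => hu ▸ u.ne_zero, fun ha => ⟨Units.mk0 a ha, rfl⟩⟩
  rw [← hunits, finsum_mem_range Units.val_injective, finsum_eq_sum_of_fintype]
  refine (sum_hom_units f).trans ?_
  simp only [hf, Fintype.card_units, Nat.cast_ite, Nat.cast_zero, Nat.cast_pred Fintype.card_pos]

lemma finsum_mem_isPrimitiveChar_and_isEvenChar [Fintype K] (hR : R ≠ 0) :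
    ((Fintype.card K : ℂ) - 1) *
        ∑ᶠ χ ∈ {χ : Polynomial K → ℂ | IsPrimitiveChar R χ ∧ IsEvenChar χ},
          χ X * starRingEnd ℂ (χ Y) =
      ∑ᶠ a ∈ {a : K | a ≠ 0}, ∑ᶠ χ ∈ {χ : Polynomial K → ℂ | IsPrimitiveChar R χ},
        χ X * starRingEnd ℂ (χ (Polynomial.C a * Y)) := by
  classical
  have hfin : {χ : Polynomial K → ℂ | IsPrimitiveChar R χ}.Finite :=
    (finite_setOf_isDirichletChar hR).subset fun χ hχ => hχ.1
  have hset : {χ : Polynomial K → ℂ | IsPrimitiveChar R χ ∧ IsEvenChar χ} =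
      {χ ∈ {χ | IsPrimitiveChar R χ} | IsEvenChar χ} := rfl
  rw [← finsum_mem_comm _ hfin (Set.toFinite _), hset, finsum_mem_sep, mul_finsum_mem]
  refine finsum_mem_congr rfl fun χ hχ => ?_
  calc ((Fintype.card K : ℂ) - 1) * (if IsEvenChar χ then χ X * starRingEnd ℂ (χ Y) else 0)
      = (∑ᶠ a ∈ {a : K | a ≠ 0}, starRingEnd ℂ (χ (Polynomial.C a))) *
          (χ X * starRingEnd ℂ (χ Y)) := by
        rw [hχ.1.finsum_mem_conj_apply_C, mul_ite, ite_mul, mul_zero, zero_mul]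
    _ = ∑ᶠ a ∈ {a : K | a ≠ 0}, χ X * starRingEnd ℂ (χ (Polynomial.C a * Y)) := by
        rw [finsum_mem_mul]
        simp only [hχ.1.map_mul', map_mul, mul_left_comm]

end Character

/-- **Orthogonality of even primitive characters.**
`∑*_{χ mod R, χ even} χ(A) conj(χ(B))` equals
`(1/(q-1)) ∑_{a ∈ 𝔽_q^*} ∑_{EF = R, F ∣ A - aB} μ(E) φ(F)` when `gcd(AB,R) = 1`,
and `0` otherwise. -/
theorem even_primitive_character_orthogonality
    (Fq : Type) [Field Fq] [Fintype Fq]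
    (R : Polynomial Fq) (hR : R.Monic) (A B : Polynomial Fq) :
    (IsCoprime (A * B) R →
      (∑ᶠ χ ∈ {χ : Polynomial Fq → ℂ | IsPrimitiveChar R χ ∧ IsEvenChar χ},
          χ A * (starRingEnd ℂ) (χ B)) =
        ((Fintype.card Fq : ℂ) - 1)⁻¹ *
          ∑ᶠ a ∈ {a : Fq | a ≠ 0},
            ∑ᶠ p ∈ {p : Polynomial Fq × Polynomial Fq |
                p.1.Monic ∧ p.2.Monic ∧ p.1 * p.2 = R ∧
                p.2 ∣ A - Polynomial.C a * B},
              (muP p.1 : ℂ) * (phiP p.2 : ℂ)) ∧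
    (¬ IsCoprime (A * B) R →
      (∑ᶠ χ ∈ {χ : Polynomial Fq → ℂ | IsPrimitiveChar R χ ∧ IsEvenChar χ},
          χ A * (starRingEnd ℂ) (χ B)) = 0) := by
  refine ⟨fun hAB => ?_, fun hAB => finsum_mem_eq_zero_of_forall_eq_zero fun χ hχ => ?_⟩
  · obtain ⟨hA, hB⟩ := IsCoprime.mul_left_iff.1 hAB
    have hq : (Fintype.card Fq : ℂ) - 1 ≠ 0 :=
      sub_ne_zero.2 (Nat.cast_ne_one.2 Fintype.one_lt_card.ne')
    rw [eq_inv_mul_iff_mul_eq₀ hq, finsum_mem_isPrimitiveChar_and_isEvenChar hR.ne_zero]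
    refine finsum_mem_congr rfl fun a ha => ?_
    have haB : IsCoprime (Polynomial.C a * B) R :=
      (isCoprime_mul_unit_left_left (Polynomial.isUnit_C.2 (isUnit_iff_ne_zero.2 ha)) B R).2 hB
    have hset : {p ∈ monicDivisorsAntidiagonal R | p.2 ∣ A - Polynomial.C a * B} =
        {p | p.1.Monic ∧ p.2.Monic ∧ p.1 * p.2 = R ∧ p.2 ∣ A - Polynomial.C a * B} := by
      simp only [monicDivisorsAntidiagonal, Set.mem_ofPred_eq, and_assoc]
    rw [finsum_mem_isPrimitiveChar hR hA haB, hset]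
  · have h : χ A * χ B = 0 := (hχ.1.1.map_mul' A B).symm.trans ((hχ.1.1.eq_zero_iff' _).2 hAB)
    rcases mul_eq_zero.1 h with h | h <;> simp [h]

end FFEH
end
end

section
/- Evaluation of the diagonal coefficient sum for the inverse Euler product: Let α_{-1} be the multiplicative function on ℳ determined by: α_{-1}(P) = −1 for deg P ≤ X and 0 for deg P > X; α_{-1}(P²) = 0 for deg P ≤ X/2, 1/2 for X/2 < deg P ≤ X, and 0 for deg P > X; α_{-1}(P³) = 0 for deg P ≤ X/2, −1/2 for X/2 < deg P ≤ X, and 0 for deg P > X; α_{-1}(P^m) = 0 for m ≥ 4. Let V ∈ ℳ (possibly depending on R). Then, as X and deg R tend to infinity with X ≤ log_q(deg R), Σ_{H,S,T ∈ ℳ with HST ∈ 𝒮_ℳ(X), gcd(S,T)=1, gcd(HST,V)=1, deg(HS) ≤ (deg R)/10, deg(HT) ≤ (deg R)/10} α_{-1}(HS)α_{-1}(HT)/|HST| = (1 + O(q^{-X/2})) Π_{P ∈ 𝒫, deg P ≤ X, P ∤ V} (1 − 1/|P|) + O(|R|^{-1/21}); in particular this sum is asymptotic to Π_{deg P ≤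 X, P ∤ V} (1 − 1/|P|). -/
open scoped BigOperators
open Filter

noncomputable section

namespace FFEH

variable {Fq : Type} [Field Fq] [Fintype Fq]

/-!
Assigning to `(H, S, T)` the exponents of each prime in `HS` and `HT` turns the summation over
triples with `gcd(S, T) = 1` into an unrestricted one, so without the degree conditions the sum
is an Euler product. Its factor at `P` is `1 - 1/|P|`, times `1 + |P|⁻²/4` when `deg P > X/2`;
these extra factors contribute `1 + O(q^{-X/2})`. The terms excluded by the degree conditions are
estimated by Rankin's trick: there `|HST|⁻¹ ≤ |R|^{-1/20} |HST|^{-1/2}`, and since `q^X ≤ deg R`,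
both the Euler product dominating `∑ |HST|^{-1/2}` and the reciprocal of `∏ (1 - 1/|P|)` are
`exp(O(√deg R))`, which is absorbed in passing from the exponent `1/20` to `1/21`.
-/

open scoped Polynomial

section MonicPrimes

variable {K : Type} [Field K] {P Q A B : K[X]}

lemma IsMonicPrime.eq_of_dvd (hP : IsMonicPrime P) (hQ : IsMonicPrime Q) (h : P ∣ Q) : P = Q :=
  Polynomial.eq_of_monic_of_associated hP.1 hQ.1 (hP.2.associated_of_dvd hQ.2 h)

lemma IsMonicPrime.emultiplicity_eq_multP (hP : IsMonicPrime P) (hA : A ≠ 0) :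
    emultiplicity P A = multP P A := by
  classical
  have le_natDegree {k : ℕ} (hk : P ^ k ∣ A) : k ≤ A.natDegree := calc
    k ≤ k * P.natDegree := Nat.le_mul_of_pos_right k hP.2.natDegree_pos
    _ = (P ^ k).natDegree := (Polynomial.natDegree_pow P k).symm
    _ ≤ A.natDegree := Polynomial.natDegree_le_of_dvd hk hA
  rw [emultiplicity_eq_coe, multP, if_neg hA]
  exact ⟨Nat.findGreatest_spec (P := fun e => P ^ e ∣ A) (Nat.zero_le _) (by simp),
    fun h => Nat.findGreatest_is_greatest (Nat.lt_succ_self _) (le_natDegree h) h⟩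

lemma isCoprime_iff_forall_isMonicPrime (hA : A ≠ 0) :
    IsCoprime A B ↔ ∀ P, IsMonicPrime P → P ∣ A → ¬ P ∣ B := by
  refine ⟨fun h P hP hPA hPB => hP.2.not_isUnit (h.isUnit_of_dvd' hPA hPB), fun h => ?_⟩
  refine isCoprime_of_irreducible_dvd (fun h0 => hA h0.1) fun z hz hzA hzB => ?_
  obtain ⟨P, hmonic, hirr, hPz⟩ := Polynomial.exists_monic_irreducible_factor z hz.not_isUnit
  exact h P ⟨hmonic, hirr⟩ (hPz.trans hzA) (hPz.trans hzB)

end MonicPrimes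

section PrimePowProd

variable {K : Type} [Field K] {D : Finset K[X]}

/-- The polynomial `∏_{P ∈ D} P ^ f P`. When `D` consists of monic primes, `f ↦ primePowProd f`
parametrises the monic polynomials all of whose prime divisors lie in `D`. -/
def primePowProd (f : D → ℕ) : K[X] := ∏ P : D, (P : K[X]) ^ f P

lemma primePowProd_add (f g : D → ℕ) :
    primePowProd (f + g) = primePowProd f * primePowProd g := by
  simp only [primePowProd, Pi.add_apply, pow_add, Finset.prod_mul_distrib]

lemma primePowProd_monic (hD : ∀ P ∈ D, IsMonicPrime P) (f : D → ℕ) : (primePowProd f).Monic :=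
  Polynomial.monic_prod_of_monic _ _ fun P _ => (hD P P.2).1.pow _

lemma multP_primePowProd (hD : ∀ P ∈ D, IsMonicPrime P) (f : D → ℕ) (P : D) :
    multP (P : K[X]) (primePowProd f) = f P := by
  have hP := hD P P.2
  have emultiplicity_of_ne (Q : D) (hQP : Q ≠ P) :
      emultiplicity (P : K[X]) ((Q : K[X]) ^ f Q) = 0 :=
    emultiplicity_eq_zero.2 fun h =>
      hQP (Subtype.ext (hP.eq_of_dvd (hD Q Q.2) (hP.2.prime.dvd_of_dvd_pow h)).symm)
  have : emultiplicity (P : K[X]) (primePowProd f) = f P := by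
    rw [primePowProd, Finset.emultiplicity_prod hP.2.prime,
      Finset.sum_eq_single P (fun Q _ => emultiplicity_of_ne Q) (by simp),
      emultiplicity_pow_self hP.1.ne_zero hP.2.not_isUnit]
  rw [hP.emultiplicity_eq_multP (primePowProd_monic hD f).ne_zero] at this
  exact_mod_cast this

lemma primePowProd_injective (hD : ∀ P ∈ D, IsMonicPrime P) :
    Function.Injective (primePowProd : (D → ℕ) → K[X]) := fun f g h => by
  funext P
  rw [← multP_primePowProd hD f, h, multP_primePowProd hD]

lemma isMonicPrime_dvd_primePowProd_iff (hD : ∀ P ∈ D, IsMonicPrime P) (f : D → ℕ) (P : K[X]) :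
    IsMonicPrime P ∧ P ∣ primePowProd f ↔ ∃ Q : D, f Q ≠ 0 ∧ (Q : K[X]) = P := by
  constructor
  · rintro ⟨hP, hdvd⟩
    obtain ⟨Q, -, hPQ⟩ := (hP.2.prime.dvd_finsetProd_iff _).1 hdvd
    have hf : f Q ≠ 0 := fun h0 => hP.2.not_isUnit (isUnit_of_dvd_one (by simpa [h0] using hPQ))
    exact ⟨Q, hf, (hP.eq_of_dvd (hD Q Q.2) (hP.2.prime.dvd_of_dvd_pow hPQ)).symm⟩
  · rintro ⟨Q, hf, rfl⟩
    exact ⟨hD Q Q.2, (dvd_pow_self _ hf).trans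
      (Finset.dvd_prod_of_mem (fun Q : D => (Q : K[X]) ^ f Q) (Finset.mem_univ Q))⟩

lemma primePowProd_multP (hD : ∀ P ∈ D, IsMonicPrime P) {A : K[X]} (hA : A.Monic)
    (hAD : ∀ P, IsMonicPrime P → P ∣ A → P ∈ D) :
    primePowProd (fun P : D => multP (P : K[X]) A) = A := by
  classical
  have count_eq (P : K[X]) (hP : IsMonicPrime P) :
      (UniqueFactorizationMonoid.normalizedFactors A).count P = multP P A := by
    have h := UniqueFactorizationMonoid.emultiplicity_eq_count_normalizedFactors hP.2 hA.ne_zero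
    rw [hP.emultiplicity_eq_multP hA.ne_zero, hP.1.normalize_eq_self] at h
    exact_mod_cast h.symm
  have factors_subset : (UniqueFactorizationMonoid.normalizedFactors A).toFinset ⊆ D := by
    intro P hP
    rw [Multiset.mem_toFinset, Polynomial.mem_normalizedFactors_iff hA.ne_zero] at hP
    exact hAD P ⟨hP.2.1, hP.1⟩ hP.2.2
  calc primePowProd (fun P : D => multP (P : K[X]) A)
      = ∏ P ∈ D, P ^ multP P A := Finset.prod_coe_sort D fun P => P ^ multP P A
    _ = ∏ P ∈ D, P ^ (UniqueFactorizationMonoid.normalizedFactors A).count P :=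
        Finset.prod_congr rfl fun P hP => by rw [count_eq P (hD P hP)]
    _ = (UniqueFactorizationMonoid.normalizedFactors A).prod :=
        (Finset.prod_multiset_count_of_subset _ _ factors_subset).symm
    _ = A := by
        rw [UniqueFactorizationMonoid.prod_normalizedFactors_eq hA.ne_zero, hA.normalize_eq_self]

lemma isCoprime_primePowProd_iff (hD : ∀ P ∈ D, IsMonicPrime P) (f g : D → ℕ) :
    IsCoprime (primePowProd f) (primePowProd g) ↔ ∀ P : D, f P = 0 ∨ g P = 0 := by
  rw [isCoprime_iff_forall_isMonicPrime (primePowProd_monic hD f).ne_zero]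
  have dvd_iff (h : D → ℕ) (P : D) : (P : K[X]) ∣ primePowProd h ↔ h P ≠ 0 := by
    simpa [hD P P.2] using isMonicPrime_dvd_primePowProd_iff hD h P
  constructor
  · intro h P
    by_contra! hfg
    exact h P (hD P P.2) ((dvd_iff f P).2 hfg.1) ((dvd_iff g P).2 hfg.2)
  · intro h P hP hPf hPg
    obtain ⟨Q, hfQ, rfl⟩ := (isMonicPrime_dvd_primePowProd_iff hD f P).1 ⟨hP, hPf⟩
    exact (h Q).elim hfQ ((dvd_iff g Q).1 hPg)

lemma alphaNeg_primePowProd (hD : ∀ P ∈ D, IsMonicPrime P) (X : ℕ) (f : D → ℕ) :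
    alphaNeg X (primePowProd f) = ∏ P : D, locAlphaNeg X (P : K[X]) (f P) := by
  classical
  have primeDivisors_eq : {P : K[X] | IsMonicPrime P ∧ P ∣ primePowProd f} =
      (({P : D | f P ≠ 0} : Finset D).image Subtype.val : Finset K[X]) := by
    ext P
    simpa using isMonicPrime_dvd_primePowProd_iff hD f P
  rw [alphaNeg, primeDivisors_eq, finprod_mem_coe_finset,
    Finset.prod_image Subtype.val_injective.injOn, Finset.prod_filter]
  refine Finset.prod_congr rfl fun P _ => ?_
  rw [multP_primePowProd hD]
  split_ifs with hf
  · rfl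
  · simp [locAlphaNeg, not_not.1 hf]

lemma natDegree_primePowProd (hD : ∀ P ∈ D, IsMonicPrime P) (f : D → ℕ) :
    (primePowProd f).natDegree = ∑ P : D, f P * (P : K[X]).natDegree := by
  rw [primePowProd, Polynomial.natDegree_prod_of_monic _ _ fun (P : D) _ => (hD P P.2).1.pow _]
  simp only [Polynomial.natDegree_pow]

lemma natDegree_primePowProd_mono (hD : ∀ P ∈ D, IsMonicPrime P) {f g : D → ℕ} (h : f ≤ g) :
    (primePowProd f).natDegree ≤ (primePowProd g).natDegree := by
  rw [natDegree_primePowProd hD, natDegree_primePowProd hD]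
  exact Finset.sum_le_sum fun P _ => Nat.mul_le_mul_right _ (h P)

end PrimePowProd

section ExponentTriple

variable {K : Type} [Field K] {D : Finset K[X]}

/-- The triple `(H, S, T)` of polynomials supported on `D` with `gcd(S, T) = 1` such that `HS` and
`HT` have at each `P ∈ D` the exponents `(g P).1` and `(g P).2`; that is, `H = gcd(HS, HT)`. -/
def exponentTriple (g : D → ℕ × ℕ) : K[X] × K[X] × K[X] :=
  (primePowProd fun P : D => min (g P).1 (g P).2, primePowProd fun P => (g P).1 - (g P).2,
    primePowProd fun P => (g P).2 - (g P).1)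

lemma exponentTriple_H_mul_S (g : D → ℕ × ℕ) :
    (exponentTriple g).1 * (exponentTriple g).2.1 = primePowProd fun P => (g P).1 := by
  rw [exponentTriple, ← primePowProd_add]
  congr 1; funext P; simp only [Pi.add_apply]; omega

lemma exponentTriple_H_mul_T (g : D → ℕ × ℕ) :
    (exponentTriple g).1 * (exponentTriple g).2.2 = primePowProd fun P => (g P).2 := by
  rw [exponentTriple, ← primePowProd_add]
  congr 1; funext P; simp only [Pi.add_apply]; omega

lemma exponentTriple_H_mul_S_mul_T (g : D → ℕ × ℕ) :
    (exponentTriple g).1 * (exponentTriple g).2.1 * (exponentTriple g).2.2 =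
      primePowProd fun P => max (g P).1 (g P).2 := by
  rw [exponentTriple_H_mul_S, exponentTriple, ← primePowProd_add]
  congr 1; funext P; simp only [Pi.add_apply]; omega

lemma exponentTriple_injective (hD : ∀ P ∈ D, IsMonicPrime P) :
    Function.Injective (exponentTriple : (D → ℕ × ℕ) → _) := by
  intro g g' h
  have hHS : (fun P => (g P).1) = fun P => (g' P).1 := primePowProd_injective hD (by
    rw [← exponentTriple_H_mul_S, ← exponentTriple_H_mul_S, h])
  have hHT : (fun P => (g P).2) = fun P => (g' P).2 := primePowProd_injective hD (by
    rw [← exponentTriple_H_mul_T, ← exponentTriple_H_mul_T, h])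
  exact funext fun P => Prod.ext (congrFun hHS P) (congrFun hHT P)

lemma exists_exponentTriple_eq (hD : ∀ P ∈ D, IsMonicPrime P) {H S T : K[X]} (hH : H.Monic)
    (hS : S.Monic) (hT : T.Monic) (hST : IsCoprime S T)
    (hHST : ∀ P, IsMonicPrime P → P ∣ H * S * T → P ∈ D) :
    ∃ g : D → ℕ × ℕ, exponentTriple g = (H, S, T) := by
  have hH' := primePowProd_multP hD hH fun P hP h => hHST P hP ((h.mul_right S).mul_right T)
  have hS' := primePowProd_multP hD hS fun P hP h => hHST P hP ((h.mul_left H).mul_right T)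
  have hT' := primePowProd_multP hD hT fun P hP h => hHST P hP (h.mul_left (H * S))
  rw [← hS', ← hT', isCoprime_primePowProd_iff hD] at hST
  refine ⟨fun P => (multP P H + multP P S, multP P H + multP P T),
    Prod.ext (Eq.trans ?_ hH') (Prod.ext (Eq.trans ?_ hS') (Eq.trans ?_ hT'))⟩ <;>
  · refine congrArg primePowProd (funext fun P => ?_)
    have := hST P
    dsimp only
    omega

/-- The triples `(H, S, T)` over which the diagonal coefficient sum is taken, with the degrees of
`HS` and `HT` bounded by `r / 10`. -/
def diagonalTriples (X r : ℕ) (V : K[X]) : Set (K[X] × K[X] × K[X]) :=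
  {t | t.1.Monic ∧ t.2.1.Monic ∧ t.2.2.Monic ∧
    SmoothM X (t.1 * t.2.1 * t.2.2) ∧
    IsCoprime t.2.1 t.2.2 ∧
    IsCoprime (t.1 * t.2.1 * t.2.2) V ∧
    10 * (t.1 * t.2.1).natDegree ≤ r ∧
    10 * (t.1 * t.2.2).natDegree ≤ r}

/-- The exponent functions whose triple meets the degree bounds of `diagonalTriples`. -/
def degreeBoundedExponents (D : Finset K[X]) (r : ℕ) : Set (D → ℕ × ℕ) :=
  {g | 10 * (primePowProd fun P => (g P).1).natDegree ≤ r ∧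
    10 * (primePowProd fun P => (g P).2).natDegree ≤ r}

lemma bijOn_exponentTriple {X : ℕ} {V : K[X]}
    (hD : ∀ P, P ∈ D ↔ IsMonicPrime P ∧ P.natDegree ≤ X ∧ ¬ P ∣ V) (r : ℕ) :
    Set.BijOn exponentTriple (degreeBoundedExponents D r) (diagonalTriples X r V) := by
  have hprime : ∀ P ∈ D, IsMonicPrime P := fun P hP => ((hD P).1 hP).1
  refine ⟨fun g hg => ?_, (exponentTriple_injective hprime).injOn, ?_⟩
  · have hmem (P : K[X]) (hP : IsMonicPrime P)
        (hdvd : P ∣ primePowProd fun P => max (g P).1 (g P).2) : P ∈ D := by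
      obtain ⟨Q, -, rfl⟩ := (isMonicPrime_dvd_primePowProd_iff hprime _ P).1 ⟨hP, hdvd⟩
      exact Q.2
    have hmonic (f : D → ℕ) : (primePowProd f).Monic := primePowProd_monic hprime f
    simp only [diagonalTriples, Set.mem_ofPred_eq]
    rw [exponentTriple_H_mul_S_mul_T, exponentTriple_H_mul_S, exponentTriple_H_mul_T]
    refine ⟨hmonic _, hmonic _, hmonic _,
      ⟨hmonic _, fun P hP hdvd => ((hD P).1 (hmem P hP hdvd)).2.1⟩, ?_, ?_, hg⟩
    · exact (isCoprime_primePowProd_iff hprime _ _).2 fun P => by omega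
    · exact (isCoprime_iff_forall_isMonicPrime (hmonic _).ne_zero).2 fun P hP hdvd =>
        ((hD P).1 (hmem P hP hdvd)).2.2
  · rintro ⟨H, S, T⟩ ⟨hH, hS, hT, hsmooth, hST, hV, hHS, hHT⟩
    obtain ⟨g, hg⟩ := exists_exponentTriple_eq hprime hH hS hT hST fun P hP hdvd =>
      (hD P).2 ⟨hP, hsmooth.2 P hP hdvd,
        (isCoprime_iff_forall_isMonicPrime hsmooth.1.ne_zero).1 hV P hP hdvd⟩
    refine ⟨g, ⟨?_, ?_⟩, hg⟩
    · rwa [← exponentTriple_H_mul_S, hg]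
    · rwa [← exponentTriple_H_mul_T, hg]

end ExponentTriple

section LocalCoefficients

variable {K : Type} [Field K]

lemma locAlphaNeg_of_four_le (X : ℕ) (P : K[X]) {m : ℕ} (hm : 4 ≤ m) : locAlphaNeg X P m = 0 := by
  unfold locAlphaNeg
  split_ifs <;> first | rfl | omega

lemma abs_locAlphaNeg_le_one (X : ℕ) (P : K[X]) (m : ℕ) : |locAlphaNeg X P m| ≤ 1 := by
  unfold locAlphaNeg
  split_ifs <;> norm_num [abs_of_pos]

end LocalCoefficients

section Finiteness

variable {K : Type} [Field K] [Finite K]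

lemma finite_setOf_natDegree_le (d : ℕ) : {A : K[X] | A.natDegree ≤ d}.Finite := by
  refine Set.Finite.of_finite_image (f := fun A (i : Fin (d + 1)) => A.coeff i)
    (Set.toFinite _) fun A hA B hB h => (Polynomial.ext_iff_natDegree_le hA hB).2 fun i hi => ?_
  exact congrFun h ⟨i, Nat.lt_succ_of_le hi⟩

lemma finite_eulerPrimes (X : ℕ) (V : K[X]) :
    {P : K[X] | IsMonicPrime P ∧ P.natDegree ≤ X ∧ ¬ P ∣ V}.Finite :=
  (finite_setOf_natDegree_le X).subset fun _ hP => hP.2.1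

end Finiteness

section EulerFactors

open Finset

variable {X : ℕ} {V : Fq[X]}

lemma absP_monic {A : Fq[X]} (hA : A.Monic) : absP A = (Fintype.card Fq : ℝ) ^ A.natDegree :=
  if_neg hA.ne_zero

lemma absP_rpow_neg_one_div {A : Fq[X]} (hA : A.Monic) (c : ℝ) :
    absP A ^ (-(1 : ℝ) / c) = (Fintype.card Fq : ℝ) ^ (-(A.natDegree : ℝ) / c) := by
  rw [absP_monic hA, ← Real.rpow_natCast_mul (Nat.cast_nonneg _)]
  congr 1
  ring

lemma IsMonicPrime.two_le_absP {P : Fq[X]} (hP : IsMonicPrime P) : 2 ≤ absP P := by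
  have two_le_card : (2 : ℝ) ≤ Fintype.card Fq := by exact_mod_cast Fintype.one_lt_card (α := Fq)
  rw [absP_monic hP.1]
  exact two_le_card.trans (le_self_pow₀ (by linarith) hP.2.natDegree_pos.ne')

lemma absP_primePowProd {D : Finset Fq[X]} (hD : ∀ P ∈ D, IsMonicPrime P) (f : D → ℕ) :
    absP (primePowProd f) = ∏ P : D, absP (P : Fq[X]) ^ f P := by
  rw [absP_monic (primePowProd_monic hD f), natDegree_primePowProd hD, ← prod_pow_eq_pow_sum]
  refine prod_congr rfl fun P _ => ?_
  rw [absP_monic (hD P P.2).1, ← pow_mul, mul_comm]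

/-- The finite set of monic primes of degree at most `X` that do not divide `V`. -/
def eulerPrimes (X : ℕ) (V : Fq[X]) : Finset Fq[X] := (finite_eulerPrimes X V).toFinset

lemma mem_eulerPrimes {P : Fq[X]} :
    P ∈ eulerPrimes X V ↔ IsMonicPrime P ∧ P.natDegree ≤ X ∧ ¬ P ∣ V :=
  Set.Finite.mem_toFinset _

lemma isMonicPrime_of_mem_eulerPrimes {P : Fq[X]} (hP : P ∈ eulerPrimes X V) : IsMonicPrime P :=
  (mem_eulerPrimes.1 hP).1

/-- The Euler product `∏_{deg P ≤ X, P ∤ V} (1 - 1/|P|)`. -/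
def eulerProd (X : ℕ) (V : Fq[X]) : ℝ :=
  ∏ᶠ P ∈ {P : Fq[X] | IsMonicPrime P ∧ P.natDegree ≤ X ∧ ¬ P ∣ V}, (1 - (absP P)⁻¹)

lemma eulerProd_eq_prod : eulerProd X V = ∏ P ∈ eulerPrimes X V, (1 - (absP P)⁻¹) :=
  finprod_mem_eq_finite_toFinset_prod _ (finite_eulerPrimes X V)

/-- The contribution of the prime `P` to the summand of `diagonalSum` when `x.1` and `x.2` are the
exponents of `P` in `HS` and `HT`; the exponent of `P` in `HST` is then `max x.1 x.2`. -/
def localTerm (X : ℕ) (P : Fq[X]) (x : ℕ × ℕ) : ℝ :=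
  locAlphaNeg X P x.1 * locAlphaNeg X P x.2 * (absP P)⁻¹ ^ max x.1 x.2

lemma support_localTerm_subset (P : Fq[X]) :
    Function.support (localTerm X P) ⊆ ↑(range 4 ×ˢ range 4) := by
  rintro ⟨a, b⟩ hx
  rw [Finset.mem_coe, mem_product, mem_range, mem_range]
  by_contra! h
  by_cases ha : a < 4
  · exact hx (by simp [localTerm, locAlphaNeg_of_four_le X P (h ha)])
  · exact hx (by simp [localTerm, locAlphaNeg_of_four_le X P (not_lt.1 ha)])

lemma abs_localTerm_le {P : Fq[X]} (hP : IsMonicPrime P) (x : ℕ × ℕ) :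
    |localTerm X P x| ≤ (absP P)⁻¹ ^ max x.1 x.2 := by
  have hpow : 0 ≤ (absP P)⁻¹ ^ max x.1 x.2 := by have := hP.two_le_absP; positivity
  rw [localTerm, abs_mul, abs_mul, abs_of_nonneg hpow]
  exact mul_le_of_le_one_left hpow
    (mul_le_one₀ (abs_locAlphaNeg_le_one _ _ _) (abs_nonneg _) (abs_locAlphaNeg_le_one _ _ _))

lemma sum_localTerm {P : Fq[X]} (hP : P.natDegree ≤ X) :
    ∑ x ∈ range 4 ×ˢ range 4, localTerm X P x =
      (if X < 2 * P.natDegree then 1 + (absP P)⁻¹ ^ 2 / 4 else 1) * (1 - (absP P)⁻¹) := by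
  set y : ℝ := (absP P)⁻¹
  set b : ℝ := if X < 2 * P.natDegree then 2⁻¹ else 0 with hb
  have coeff_zero : locAlphaNeg X P 0 = 1 := if_pos rfl
  have coeff_one : locAlphaNeg X P 1 = -1 := by grind [locAlphaNeg]
  have coeff_two : locAlphaNeg X P 2 = b := by grind [locAlphaNeg]
  have coeff_three : locAlphaNeg X P 3 = -b := by grind [locAlphaNeg]
  calc ∑ x ∈ range 4 ×ˢ range 4, localTerm X P x
      = (1 + b ^ 2 * y ^ 2) * (1 - y) := by
        simp only [localTerm, sum_product, sum_range_succ, sum_range_zero, coeff_zero, coeff_one,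
          coeff_two, coeff_three, Nat.max_def, Nat.reduceLeDiff, ↓reduceIte]
        ring
    _ = _ := by
        rw [hb]
        split_ifs <;> ring

lemma sum_pow_max_le {y : ℝ} (hy0 : 0 ≤ y) (hy1 : y ≤ 1) :
    ∑ x ∈ range 4 ×ˢ range 4, y ^ max x.1 x.2 ≤ 1 + 15 * y := by
  have sq_le : y ^ 2 ≤ y := pow_le_of_le_one hy0 hy1 two_ne_zero
  have cube_le : y ^ 3 ≤ y := pow_le_of_le_one hy0 hy1 three_ne_zero
  have expand : ∑ x ∈ range 4 ×ˢ range 4, y ^ max x.1 x.2 =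
      1 + 3 * y + 5 * y ^ 2 + 7 * y ^ 3 := by
    simp only [sum_product, sum_range_succ, sum_range_zero, Nat.max_def, Nat.reduceLeDiff,
      ↓reduceIte]
    ring
  linarith

end EulerFactors

section Diagonal

variable {X : ℕ}

/-- The diagonal coefficient sum, with the degrees of `HS` and `HT` bounded by `r / 10`. -/
def diagonalSum (X r : ℕ) (V : Fq[X]) : ℝ :=
  ∑ᶠ t ∈ diagonalTriples X r V,
    alphaNeg X (t.1 * t.2.1) * alphaNeg X (t.1 * t.2.2) / absP (t.1 * t.2.1 * t.2.2)

/-- The product of the factors `1 + |P|⁻²/4` coming from the primes with `X/2 < deg P ≤ X`, at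
which the Dirichlet series of `α₋₁` is not just `1 - |P|⁻ˢ`. -/
def eulerCorrection (X : ℕ) (V : Fq[X]) : ℝ :=
  ∏ P ∈ eulerPrimes X V with X < 2 * P.natDegree, (1 + (absP P)⁻¹ ^ 2 / 4)

lemma alphaNeg_mul_alphaNeg_div_absP_exponentTriple {D : Finset Fq[X]}
    (hD : ∀ P ∈ D, IsMonicPrime P) (g : D → ℕ × ℕ) :
    alphaNeg X ((exponentTriple g).1 * (exponentTriple g).2.1) *
        alphaNeg X ((exponentTriple g).1 * (exponentTriple g).2.2) /
        absP ((exponentTriple g).1 * (exponentTriple g).2.1 * (exponentTriple g).2.2) =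
      ∏ P : D, localTerm X (P : Fq[X]) (g P) := by
  rw [exponentTriple_H_mul_S_mul_T, exponentTriple_H_mul_S, exponentTriple_H_mul_T,
    alphaNeg_primePowProd hD, alphaNeg_primePowProd hD, absP_primePowProd hD, div_eq_mul_inv,
    ← Finset.prod_inv_distrib, ← Finset.prod_mul_distrib, ← Finset.prod_mul_distrib]
  simp only [localTerm, inv_pow]

open scoped Classical in
lemma diagonalSum_eq_sum (X r : ℕ) (V : Fq[X]) :
    diagonalSum X r V =
      ∑ g ∈ Fintype.piFinset fun _ : eulerPrimes X V => Finset.range 4 ×ˢ Finset.range 4 with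
        g ∈ degreeBoundedExponents (eulerPrimes X V) r,
        ∏ P : eulerPrimes X V, localTerm X (P : Fq[X]) (g P) := by
  have hD (P : Fq[X]) (hP : P ∈ eulerPrimes X V) := isMonicPrime_of_mem_eulerPrimes hP
  rw [diagonalSum, ← finsum_mem_eq_of_bijOn exponentTriple
    (bijOn_exponentTriple (fun _ => mem_eulerPrimes) r) fun g _ =>
      (alphaNeg_mul_alphaNeg_div_absP_exponentTriple hD g).symm]
  refine finsum_mem_eq_sum_of_inter_support_eq _ (Set.ext fun g => ?_)
  simp only [Set.mem_inter_iff, Finset.mem_coe, Finset.mem_filter, and_congr_left_iff]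
  refine fun hg => (and_iff_right (Fintype.mem_piFinset.2 fun P => ?_)).symm
  exact support_localTerm_subset (P : Fq[X]) (Finset.prod_ne_zero_iff.1 hg P (Finset.mem_univ P))

lemma prod_sum_localTerm (X : ℕ) (V : Fq[X]) :
    ∏ P : eulerPrimes X V, ∑ x ∈ Finset.range 4 ×ˢ Finset.range 4, localTerm X (P : Fq[X]) x =
      eulerCorrection X V * eulerProd X V := by
  rw [Finset.prod_coe_sort (eulerPrimes X V) fun P => ∑ x ∈ _, localTerm X P x,
    Finset.prod_congr rfl fun P hP => sum_localTerm (mem_eulerPrimes.1 hP).2.1,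
    Finset.prod_mul_distrib, ← Finset.prod_filter, eulerCorrection, eulerProd_eq_prod]

end Diagonal

section MonicSums

lemma ncard_monic_natDegree_eq (d : ℕ) :
    {A : Fq[X] | A.Monic ∧ A.natDegree = d}.ncard = Fintype.card Fq ^ d := calc
  _ = Nat.card (Fin d → Fq) :=
    Nat.card_congr ((Polynomial.monicEquivDegreeLT d).trans (Polynomial.degreeLTEquiv Fq d).toEquiv)
  _ = Fintype.card Fq ^ d := by rw [Nat.card_fun, Nat.card_fin, Nat.card_eq_fintype_card]

lemma sum_natDegree_le {J : Finset Fq[X]} {I : Finset ℕ} (hJ : ∀ A ∈ J, A.Monic)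
    (hI : ∀ A ∈ J, A.natDegree ∈ I) (φ : ℕ → ℝ) (hφ : ∀ d ∈ I, 0 ≤ φ d) :
    ∑ A ∈ J, φ A.natDegree ≤ ∑ d ∈ I, (Fintype.card Fq : ℝ) ^ d * φ d := by
  have card_fiber_le (d : ℕ) :
      ({A ∈ J | A.natDegree = d}.card : ℝ) ≤ (Fintype.card Fq : ℝ) ^ d := by
    rw [← Nat.cast_pow, ← ncard_monic_natDegree_eq, ← Set.ncard_coe_finset]
    refine Nat.cast_le.2 (Set.ncard_le_ncard (fun A hA => ?_)
      ((finite_setOf_natDegree_le d).subset fun A hA => hA.2.le))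
    rw [Finset.mem_coe, Finset.mem_filter] at hA
    exact ⟨hJ A hA.1, hA.2⟩
  rw [← Finset.sum_fiberwise_of_maps_to hI]
  refine Finset.sum_le_sum fun d hd => ?_
  rw [Finset.sum_congr rfl fun A hA => congrArg φ (Finset.mem_filter.1 hA).2, Finset.sum_const,
    nsmul_eq_mul]
  exact mul_le_mul_of_nonneg_right (card_fiber_le d) (hφ d hd)

variable (Fq) in
lemma one_lt_sqrt_card : 1 < √(Fintype.card Fq : ℝ) := by
  rw [Real.lt_sqrt zero_le_one, one_pow]
  exact_mod_cast Fintype.one_lt_card (α := Fq)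

lemma sum_inv_sqrt_absP_le {J : Finset Fq[X]} {X : ℕ} (hJ : ∀ A ∈ J, A.Monic)
    (hX : ∀ A ∈ J, A.natDegree ≤ X) :
    ∑ A ∈ J, (√(absP A))⁻¹ ≤
      √(Fintype.card Fq) / (√(Fintype.card Fq) - 1) * √((Fintype.card Fq : ℝ) ^ X) := by
  set s := √(Fintype.card Fq : ℝ)
  have hs : 1 < s := one_lt_sqrt_card Fq
  have card_eq : (Fintype.card Fq : ℝ) = s ^ 2 := (Real.sq_sqrt (Nat.cast_nonneg _)).symm
  have sqrt_card_pow (d : ℕ) : √((Fintype.card Fq : ℝ) ^ d) = s ^ d := by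
    rw [card_eq, ← pow_mul, mul_comm, pow_mul, Real.sqrt_sq (by positivity)]
  calc ∑ A ∈ J, (√(absP A))⁻¹
      = ∑ A ∈ J, (s ^ A.natDegree)⁻¹ :=
        Finset.sum_congr rfl fun A hA => by rw [absP_monic (hJ A hA), sqrt_card_pow]
    _ ≤ ∑ d ∈ Finset.range (X + 1), (Fintype.card Fq : ℝ) ^ d * (s ^ d)⁻¹ :=
        sum_natDegree_le hJ (fun A hA => Finset.mem_range_succ_iff.2 (hX A hA))
          (fun d => (s ^ d)⁻¹) fun d _ => by positivity
    _ = ∑ d ∈ Finset.range (X + 1), s ^ d := Finset.sum_congr rfl fun d _ => by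
        rw [card_eq, pow_right_comm]; field_simp
    _ = (s ^ (X + 1) - 1) / (s - 1) := geom_sum_eq hs.ne' _
    _ ≤ s ^ (X + 1) / (s - 1) := by gcongr; linarith
    _ = s / (s - 1) * √((Fintype.card Fq : ℝ) ^ X) := by rw [sqrt_card_pow]; ring

lemma sum_inv_absP_sq_le {J : Finset Fq[X]} {X : ℕ} (hJ : ∀ A ∈ J, A.Monic)
    (hX : ∀ A ∈ J, X < 2 * A.natDegree) :
    ∑ A ∈ J, (absP A)⁻¹ ^ 2 ≤ 2 * (Fintype.card Fq : ℝ) ^ (-(X : ℝ) / 2) := by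
  have two_le_card : (2 : ℝ) ≤ Fintype.card Fq := by exact_mod_cast Fintype.one_lt_card (α := Fq)
  set q : ℝ := (Fintype.card Fq : ℝ)
  have inv_le : q⁻¹ ≤ 2⁻¹ := by gcongr
  calc ∑ A ∈ J, (absP A)⁻¹ ^ 2
      = ∑ A ∈ J, (q ^ A.natDegree)⁻¹ ^ 2 :=
        Finset.sum_congr rfl fun A hA => by rw [absP_monic (hJ A hA)]
    _ ≤ ∑ d ∈ Finset.Ico (X / 2 + 1) (J.sup Polynomial.natDegree + 1), q ^ d * (q ^ d)⁻¹ ^ 2 :=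
        sum_natDegree_le hJ (fun A hA => Finset.mem_Ico.2
          ⟨by have := hX A hA; omega, Nat.lt_succ_of_le (Finset.le_sup hA)⟩)
          (fun d => (q ^ d)⁻¹ ^ 2) fun d _ => by positivity
    _ = ∑ d ∈ Finset.Ico (X / 2 + 1) (J.sup Polynomial.natDegree + 1), q⁻¹ ^ d :=
        Finset.sum_congr rfl fun d _ => by rw [inv_pow q d]; field_simp
    _ ≤ q⁻¹ ^ (X / 2 + 1) / (1 - q⁻¹) := geom_sum_Ico_le_of_lt_one (by positivity) (by linarith)
    _ ≤ q⁻¹ ^ (X / 2 + 1) / 2⁻¹ := by gcongr; linarith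
    _ = 2 * q ^ (-((X / 2 + 1 : ℕ) : ℝ)) := by
        rw [Real.rpow_neg (by positivity), Real.rpow_natCast, inv_pow]; ring
    _ ≤ 2 * q ^ (-(X : ℝ) / 2) := by
        have : (X : ℝ) ≤ 2 * (X / 2 + 1 : ℕ) := by exact_mod_cast (by omega)
        gcongr <;> linarith

end MonicSums

section FiniteProducts

variable {ι κ : Type*}

lemma exp_neg_two_mul_le_one_sub {y : ℝ} (hy0 : 0 ≤ y) (hy : y ≤ 1 / 2) :
    Real.exp (-(2 * y)) ≤ 1 - y := by
  rw [Real.exp_neg, inv_le_comm₀ (Real.exp_pos _) (by linarith)]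
  refine le_trans ?_ (Real.add_one_le_exp (2 * y))
  rw [inv_le_iff_one_le_mul₀ (by linarith)]
  nlinarith

lemma exp_neg_two_mul_sum_le_prod_one_sub {s : Finset ι} {y : ι → ℝ}
    (hy0 : ∀ i ∈ s, 0 ≤ y i) (hy : ∀ i ∈ s, y i ≤ 1 / 2) :
    Real.exp (-(2 * ∑ i ∈ s, y i)) ≤ ∏ i ∈ s, (1 - y i) := by
  rw [Finset.mul_sum, ← Finset.sum_neg_distrib, Real.exp_sum]
  exact Finset.prod_le_prod (fun _ _ => (Real.exp_pos _).le) fun i hi =>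
    exp_neg_two_mul_le_one_sub (hy0 i hi) (hy i hi)

lemma abs_sum_filter_piFinset_prod_sub_le [Fintype ι] [DecidableEq ι] (t : ι → Finset κ)
    {w u : ι → κ → ℝ} {M : ℝ} (c : (ι → κ) → Prop) [DecidablePred c] (hM : 0 ≤ M)
    (hu : ∀ i x, 0 ≤ u i x)
    (h : ∀ g, ¬ c g → |∏ i, w i (g i)| ≤ M * ∏ i, u i (g i)) :
    |∑ g ∈ Fintype.piFinset t with c g, ∏ i, w i (g i) - ∏ i, ∑ x ∈ t i, w i x| ≤
      M * ∏ i, ∑ x ∈ t i, u i x := by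
  have split := Finset.sum_filter_add_sum_filter_not (Fintype.piFinset t) c
    fun g => ∏ i, w i (g i)
  rw [Finset.prod_univ_sum, ← split, sub_add_cancel_left, abs_neg, Finset.prod_univ_sum,
    Finset.mul_sum]
  calc |∑ g ∈ Fintype.piFinset t with ¬ c g, ∏ i, w i (g i)|
      ≤ ∑ g ∈ Fintype.piFinset t with ¬ c g, |∏ i, w i (g i)| := Finset.abs_sum_le_sum_abs _ _
    _ ≤ ∑ g ∈ Fintype.piFinset t with ¬ c g, M * ∏ i, u i (g i) :=
        Finset.sum_le_sum fun g hg => h g (Finset.mem_filter.1 hg).2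
    _ ≤ ∑ g ∈ Fintype.piFinset t, M * ∏ i, u i (g i) :=
        Finset.sum_le_sum_of_subset_of_nonneg (Finset.filter_subset _ _)
          fun g _ _ => mul_nonneg hM (Finset.prod_nonneg fun i _ => hu i _)

end FiniteProducts

section Estimates

variable {X r : ℕ} {V : Fq[X]}

lemma sum_eulerPrimes_inv_sqrt_absP_le (V : Fq[X]) (hXr : (Fintype.card Fq : ℝ) ^ X ≤ r) :
    ∑ P ∈ eulerPrimes X V, (√(absP P))⁻¹ ≤
      √(Fintype.card Fq) / (√(Fintype.card Fq) - 1) * √r := by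
  refine (sum_inv_sqrt_absP_le (fun P hP => (isMonicPrime_of_mem_eulerPrimes hP).1)
    fun P hP => (mem_eulerPrimes.1 hP).2.1).trans ?_
  have := sub_pos.2 (one_lt_sqrt_card Fq)
  gcongr

lemma eulerProd_le_one : eulerProd X V ≤ 1 := by
  rw [eulerProd_eq_prod]
  refine Finset.prod_le_one (fun P hP => ?_) fun P hP => ?_ <;>
  have := (isMonicPrime_of_mem_eulerPrimes hP).two_le_absP
  · exact sub_nonneg.2 (inv_le_one_of_one_le₀ (by linarith))
  · exact sub_le_self 1 (by positivity)

lemma exp_neg_le_eulerProd (X : ℕ) (V : Fq[X]) :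
    Real.exp (-(2 * ∑ P ∈ eulerPrimes X V, (√(absP P))⁻¹)) ≤ eulerProd X V := by
  have two_le_absP (P : Fq[X]) (hP : P ∈ eulerPrimes X V) : 2 ≤ absP P :=
    (isMonicPrime_of_mem_eulerPrimes hP).two_le_absP
  have inv_le_inv_sqrt (P : Fq[X]) (hP : P ∈ eulerPrimes X V) :
      (absP P)⁻¹ ≤ (√(absP P))⁻¹ := by
    have := two_le_absP P hP
    gcongr ?_⁻¹
    exact Real.sqrt_le_self_iff.2 (Or.inr (by linarith))
  calc Real.exp (-(2 * ∑ P ∈ eulerPrimes X V, (√(absP P))⁻¹))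
      ≤ Real.exp (-(2 * ∑ P ∈ eulerPrimes X V, (absP P)⁻¹)) := by
        have := Finset.sum_le_sum inv_le_inv_sqrt
        gcongr
    _ ≤ ∏ P ∈ eulerPrimes X V, (1 - (absP P)⁻¹) := by
        refine exp_neg_two_mul_sum_le_prod_one_sub (fun P hP => ?_) fun P hP => ?_ <;>
        have := two_le_absP P hP
        · positivity
        · rw [one_div]; gcongr
    _ = eulerProd X V := eulerProd_eq_prod.symm

lemma eulerProd_pos : 0 < eulerProd X V :=
  (Real.exp_pos _).trans_le (exp_neg_le_eulerProd X V)

lemma abs_eulerCorrection_sub_one_le (X : ℕ) (V : Fq[X]) :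
    |eulerCorrection X V - 1| ≤ (Fintype.card Fq : ℝ) ^ (-(X : ℝ) / 2) := by
  set δ : ℝ := ∑ P ∈ eulerPrimes X V with X < 2 * P.natDegree, (absP P)⁻¹ ^ 2 / 4
  have δ_nonneg : 0 ≤ δ := Finset.sum_nonneg fun P _ => by positivity
  have δ_le : δ ≤ (Fintype.card Fq : ℝ) ^ (-(X : ℝ) / 2) / 2 := by
    have := sum_inv_absP_sq_le (J := {P ∈ eulerPrimes X V | X < 2 * P.natDegree}) (X := X)
      (fun P hP => (isMonicPrime_of_mem_eulerPrimes (Finset.mem_filter.1 hP).1).1)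
      fun P hP => (Finset.mem_filter.1 hP).2
    have δ_eq : δ = _ / 4 := (Finset.sum_div _ _ _).symm
    linarith
  have one_le : 1 ≤ eulerCorrection X V :=
    Finset.one_le_prod fun P _ => le_add_of_nonneg_right (by positivity)
  have le_exp : eulerCorrection X V ≤ Real.exp δ :=
    Real.prod_one_add_le_exp_sum _ fun P => by positivity
  have rpow_le_one : (Fintype.card Fq : ℝ) ^ (-(X : ℝ) / 2) ≤ 1 :=
    Real.rpow_le_one_of_one_le_of_nonpos (by exact_mod_cast Fintype.card_pos)
      (div_nonpos_of_nonpos_of_nonneg (by simp) (by norm_num))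
  have exp_sub_one_le := Real.abs_exp_sub_one_le (x := δ) (by rw [abs_of_nonneg δ_nonneg]; linarith)
  rw [abs_of_nonneg (sub_nonneg.2 one_le)]
  rw [abs_of_nonneg δ_nonneg] at exp_sub_one_le
  linarith [le_abs_self (Real.exp δ - 1)]

end Estimates

section Truncation

variable {X r : ℕ}

lemma sqrt_absP_primePowProd {D : Finset Fq[X]} (hD : ∀ P ∈ D, IsMonicPrime P) (f : D → ℕ) :
    √(absP (primePowProd f)) = ∏ P : D, √(absP (P : Fq[X])) ^ f P := by
  rw [absP_primePowProd hD, Real.sqrt_eq_iff_mul_self_eq_of_pos, ← Finset.prod_mul_distrib]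
  · refine Finset.prod_congr rfl fun P _ => ?_
    have := (hD P P.2).two_le_absP
    rw [← mul_pow, Real.mul_self_sqrt (by linarith)]
  · refine Finset.prod_pos fun P _ => ?_
    have := (hD P P.2).two_le_absP
    positivity

lemma abs_prod_localTerm_le {D : Finset Fq[X]} (hD : ∀ P ∈ D, IsMonicPrime P) (g : D → ℕ × ℕ) :
    |∏ P : D, localTerm X (P : Fq[X]) (g P)| ≤
      (absP (primePowProd fun P => max (g P).1 (g P).2))⁻¹ := by
  rw [absP_primePowProd hD, ← Finset.prod_inv_distrib, Finset.abs_prod]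
  simp only [← inv_pow]
  exact Finset.prod_le_prod (fun _ _ => abs_nonneg _) fun P _ => abs_localTerm_le (hD P P.2) _

lemma inv_sqrt_absP_primePowProd_max_le {D : Finset Fq[X]} (hD : ∀ P ∈ D, IsMonicPrime P)
    {g : D → ℕ × ℕ} (hg : g ∉ degreeBoundedExponents D r) :
    (√(absP (primePowProd fun P => max (g P).1 (g P).2)))⁻¹ ≤
      (Fintype.card Fq : ℝ) ^ (-(r : ℝ) / 20) := by
  set L := primePowProd fun P => max (g P).1 (g P).2
  have lt_natDegree : r < 10 * L.natDegree := by
    have hHS : (primePowProd fun P => (g P).1).natDegree ≤ L.natDegree :=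
      natDegree_primePowProd_mono hD fun P => le_max_left _ _
    have hHT : (primePowProd fun P => (g P).2).natDegree ≤ L.natDegree :=
      natDegree_primePowProd_mono hD fun P => le_max_right _ _
    by_contra! hr
    exact hg ⟨by omega, by omega⟩
  have hr : (r : ℝ) ≤ 10 * L.natDegree := by exact_mod_cast lt_natDegree.le
  have one_le_card : (1 : ℝ) ≤ Fintype.card Fq := by exact_mod_cast Fintype.card_pos
  rw [absP_monic (primePowProd_monic hD _), Real.sqrt_eq_rpow, ← Real.rpow_natCast,
    ← Real.rpow_mul (by linarith), ← Real.rpow_neg (by linarith)]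
  exact Real.rpow_le_rpow_of_exponent_le one_le_card (by linarith)

lemma abs_prod_localTerm_le_of_notMem {D : Finset Fq[X]} (hD : ∀ P ∈ D, IsMonicPrime P)
    {g : D → ℕ × ℕ} (hg : g ∉ degreeBoundedExponents D r) :
    |∏ P : D, localTerm X (P : Fq[X]) (g P)| ≤ (Fintype.card Fq : ℝ) ^ (-(r : ℝ) / 20) *
      ∏ P : D, (√(absP (P : Fq[X])))⁻¹ ^ max (g P).1 (g P).2 := by
  set L := primePowProd fun P => max (g P).1 (g P).2
  have prod_eq : ∏ P : D, (√(absP (P : Fq[X])))⁻¹ ^ max (g P).1 (g P).2 = (√(absP L))⁻¹ := by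
    simp only [sqrt_absP_primePowProd hD, inv_pow, Finset.prod_inv_distrib, L]
  have absP_nonneg : 0 ≤ absP L := by
    rw [absP_monic (primePowProd_monic hD _)]
    positivity
  calc |∏ P : D, localTerm X (P : Fq[X]) (g P)|
      ≤ (absP L)⁻¹ := abs_prod_localTerm_le hD g
    _ = (√(absP L))⁻¹ * (√(absP L))⁻¹ := by rw [← mul_inv, Real.mul_self_sqrt absP_nonneg]
    _ ≤ (Fintype.card Fq : ℝ) ^ (-(r : ℝ) / 20) * (√(absP L))⁻¹ := by
        gcongr
        exact inv_sqrt_absP_primePowProd_max_le hD hg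
    _ = _ := by rw [prod_eq]

lemma abs_diagonalSum_sub_le (X r : ℕ) (V : Fq[X]) :
    |diagonalSum X r V - eulerCorrection X V * eulerProd X V| ≤
      (Fintype.card Fq : ℝ) ^ (-(r : ℝ) / 20) *
        Real.exp (15 * ∑ P ∈ eulerPrimes X V, (√(absP P))⁻¹) := by
  classical
  have hD (P : Fq[X]) (hP : P ∈ eulerPrimes X V) := isMonicPrime_of_mem_eulerPrimes hP
  have inv_sqrt_le_one (P : Fq[X]) (hP : P ∈ eulerPrimes X V) : (√(absP P))⁻¹ ≤ 1 :=
    inv_le_one_of_one_le₀ (Real.one_le_sqrt.2 (by have := (hD P hP).two_le_absP; linarith))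
  rw [diagonalSum_eq_sum, ← prod_sum_localTerm, Finset.mul_sum]
  refine (abs_sum_filter_piFinset_prod_sub_le _ _ (by positivity)
    (u := fun (P : eulerPrimes X V) x => (√(absP (P : Fq[X])))⁻¹ ^ max x.1 x.2)
    (fun _ _ => by positivity) fun g hg => abs_prod_localTerm_le_of_notMem hD hg).trans ?_
  gcongr
  calc ∏ P : eulerPrimes X V, ∑ x ∈ Finset.range 4 ×ˢ Finset.range 4,
        (√(absP (P : Fq[X])))⁻¹ ^ max x.1 x.2
      ≤ ∏ P : eulerPrimes X V, (1 + 15 * (√(absP (P : Fq[X])))⁻¹) :=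
        Finset.prod_le_prod (fun P _ => by positivity) fun P _ =>
          sum_pow_max_le (by positivity) (inv_sqrt_le_one P P.2)
    _ = ∏ P ∈ eulerPrimes X V, (1 + 15 * (√(absP P))⁻¹) :=
        Finset.prod_coe_sort _ fun P => 1 + 15 * (√(absP P))⁻¹
    _ ≤ Real.exp (∑ P ∈ eulerPrimes X V, 15 * (√(absP P))⁻¹) :=
        Real.prod_one_add_le_exp_sum _ fun P => by positivity

end Truncation

section Asymptotics

lemma eventually_rpow_mul_exp_sqrt_le {q a b : ℝ} (C : ℝ) (hq : 1 < q) (hab : a < b) :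
    ∀ᶠ x : ℝ in atTop, q ^ (-(b * x)) * Real.exp (C * √x) ≤ q ^ (-(a * x)) := by
  have hlog : 0 < (b - a) * Real.log q := mul_pos (sub_pos.2 hab) (Real.log_pos hq)
  filter_upwards [Real.tendsto_sqrt_atTop.eventually_ge_atTop (C / ((b - a) * Real.log q)),
    eventually_ge_atTop 0] with x hx hx0
  have exponent_le : C * √x ≤ (b - a) * Real.log q * x := calc
    C * √x ≤ √x * ((b - a) * Real.log q) * √x :=
      mul_le_mul_of_nonneg_right ((div_le_iff₀ hlog).1 hx) (Real.sqrt_nonneg x)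
    _ = (b - a) * Real.log q * (√x * √x) := by ring
    _ = (b - a) * Real.log q * x := by rw [Real.mul_self_sqrt hx0]
  rw [Real.rpow_def_of_pos (by linarith), Real.rpow_def_of_pos (by linarith), ← Real.exp_add]
  exact Real.exp_le_exp.2 (by linarith)

variable (Fq) in
theorem eventually_abs_diagonalSum_sub_le :
    ∀ᶠ r : ℕ in atTop, ∀ (X : ℕ) (V : Fq[X]), (Fintype.card Fq : ℝ) ^ X ≤ r →
      |diagonalSum X r V - eulerCorrection X V * eulerProd X V| ≤
        (Fintype.card Fq : ℝ) ^ (-(r : ℝ) / 21) * eulerProd X V := by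
  have one_lt_card : (1 : ℝ) < Fintype.card Fq := by exact_mod_cast Fintype.one_lt_card (α := Fq)
  set q : ℝ := (Fintype.card Fq : ℝ)
  set c : ℝ := √q / (√q - 1)
  filter_upwards [tendsto_natCast_atTop_atTop.eventually
    (eventually_rpow_mul_exp_sqrt_le (17 * c) one_lt_card (a := 1 / 21) (b := 1 / 20)
      (by norm_num))] with r hr X V hXr
  set U : ℝ := ∑ P ∈ eulerPrimes X V, (√(absP P))⁻¹
  have hU : U ≤ c * √r := sum_eulerPrimes_inv_sqrt_absP_le V hXr
  calc |diagonalSum X r V - eulerCorrection X V * eulerProd X V|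
      ≤ q ^ (-(r : ℝ) / 20) * Real.exp (15 * U) := abs_diagonalSum_sub_le X r V
    _ = q ^ (-(1 / 20 * r : ℝ)) * Real.exp (17 * U) * Real.exp (-(2 * U)) := by
        rw [mul_assoc, ← Real.exp_add]; ring_nf
    _ ≤ q ^ (-(1 / 20 * r : ℝ)) * Real.exp (17 * c * √r) * eulerProd X V := by
        gcongr ?_ * Real.exp ?_ * ?_
        · linarith
        · exact exp_neg_le_eulerProd X V
    _ ≤ q ^ (-(1 / 21 * r : ℝ)) * eulerProd X V := by
        have := eulerProd_pos (X := X) (V := V)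
        gcongr
    _ = q ^ (-(r : ℝ) / 21) * eulerProd X V := by ring_nf

lemma tendsto_rpow_neg_natCast_div_nhds_zero {u : ℕ → ℕ} (hu : Tendsto u atTop atTop) {q c : ℝ}
    (hq : 1 < q) (hc : 0 < c) : Tendsto (fun n => q ^ (-(u n : ℝ) / c)) atTop (nhds 0) :=
  (tendsto_rpow_atBot_of_base_gt_one q hq).comp <| (tendsto_neg_atTop_atBot.comp
    (tendsto_natCast_atTop_atTop.comp hu)).atBot_div_const hc

lemma abs_div_sub_one_le {s e p δ : ℝ} (hp : 0 < p) (h : |s - e * p| ≤ δ * p) :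
    |s / p - 1| ≤ δ + |e - 1| := calc
  |s / p - 1| ≤ |s / p - e| + |e - 1| := abs_sub_le _ _ _
  _ = |s - e * p| / p + |e - 1| := by rw [div_sub' hp.ne', abs_div, abs_of_pos hp, mul_comm p e]
  _ ≤ δ + |e - 1| := by gcongr; exact (div_le_iff₀ hp).2 h

end Asymptotics

/-- **Evaluation of the diagonal coefficient sum for the inverse Euler product:**
as `X, deg R → ∞` with `X ≤ log_q (deg R)`, the sum
`∑_{HST ∈ 𝒮_ℳ(X), (S,T)=1, (HST,V)=1, deg HS, deg HT ≤ deg R/10} α₋₁(HS)α₋₁(HT)/|HST|`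
equals `(1+O(q^{-X/2})) ∏_{deg P ≤ X, P ∤ V} (1-|P|⁻¹) + O(|R|^{-1/21})`, and in
particular is asymptotic to `∏_{deg P ≤ X, P ∤ V} (1-|P|⁻¹)`. -/
theorem diagonal_alphaNeg_sum
    (Fq : Type) [Field Fq] [Fintype Fq]
    (Rseq Vseq : ℕ → Polynomial Fq) (Xseq : ℕ → ℕ)
    (hRmonic : ∀ n, (Rseq n).Monic) (hVmonic : ∀ n, (Vseq n).Monic)
    (hX1 : ∀ n, 1 ≤ Xseq n)
    (hXtend : Filter.Tendsto Xseq Filter.atTop Filter.atTop)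
    (hRtend : Filter.Tendsto (fun n => (Rseq n).natDegree) Filter.atTop Filter.atTop)
    (hXR : ∀ n, (Fintype.card Fq : ℝ) ^ Xseq n ≤ ((Rseq n).natDegree : ℝ)) :
    let S : ℕ → ℝ := fun n =>
      ∑ᶠ t ∈ {t : Polynomial Fq × Polynomial Fq × Polynomial Fq |
          t.1.Monic ∧ t.2.1.Monic ∧ t.2.2.Monic ∧
          SmoothM (Xseq n) (t.1 * t.2.1 * t.2.2) ∧
          IsCoprime t.2.1 t.2.2 ∧
          IsCoprime (t.1 * t.2.1 * t.2.2) (Vseq n) ∧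
          10 * (t.1 * t.2.1).natDegree ≤ (Rseq n).natDegree ∧
          10 * (t.1 * t.2.2).natDegree ≤ (Rseq n).natDegree},
        alphaNeg (Xseq n) (t.1 * t.2.1) * alphaNeg (Xseq n) (t.1 * t.2.2) /
          absP (t.1 * t.2.1 * t.2.2)
    let Pr : ℕ → ℝ := fun n =>
      ∏ᶠ P ∈ {P : Polynomial Fq | IsMonicPrime P ∧ P.natDegree ≤ Xseq n ∧ ¬ P ∣ Vseq n},
        (1 - (absP P)⁻¹)
    (∃ C : ℝ, 0 < C ∧ ∀ᶠ n in Filter.atTop, ∃ ε : ℝ,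
      |ε| ≤ C * (Fintype.card Fq : ℝ) ^ (-(Xseq n : ℝ) / 2) ∧
      |S n - (1 + ε) * Pr n| ≤ C * absP (Rseq n) ^ (-(1 : ℝ) / 21)) ∧
    Filter.Tendsto (fun n => S n / Pr n) Filter.atTop (nhds 1) := by
  intro S Pr
  have one_lt_card : (1 : ℝ) < Fintype.card Fq := by exact_mod_cast Fintype.one_lt_card (α := Fq)
  have hS : ∀ᶠ n in atTop, |S n - eulerCorrection (Xseq n) (Vseq n) * Pr n| ≤
      (Fintype.card Fq : ℝ) ^ (-((Rseq n).natDegree : ℝ) / 21) * Pr n :=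
    (hRtend.eventually (eventually_abs_diagonalSum_sub_le Fq)).mono fun n h => h _ _ (hXR n)
  constructor
  · refine ⟨1, one_pos, hS.mono fun n hn => ⟨eulerCorrection (Xseq n) (Vseq n) - 1, ?_, ?_⟩⟩
    · rw [one_mul]
      exact abs_eulerCorrection_sub_one_le _ _
    · rw [one_mul, absP_rpow_neg_one_div (hRmonic n), add_sub_cancel]
      exact hn.trans (mul_le_of_le_one_right (by positivity) eulerProd_le_one)
  · have hlim := (tendsto_rpow_neg_natCast_div_nhds_zero hRtend one_lt_card (c := 21)
      (by norm_num)).add (tendsto_rpow_neg_natCast_div_nhds_zero hXtend one_lt_card two_pos)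
    rw [add_zero] at hlim
    rw [tendsto_iff_dist_tendsto_zero]
    refine squeeze_zero' (Eventually.of_forall fun _ => dist_nonneg) (hS.mono fun n hn => ?_) hlim
    exact (abs_div_sub_one_le eulerProd_pos hn).trans
      (add_le_add_right (abs_eulerCorrection_sub_one_le _ _) _)

end FFEH
end
end
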